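/- Let B^H be a d-dimensional fractional Brownian motion of Hurst index H ∈ (0,1), I = [a,b] with 0 < a < b ≤ 1, f : I → ℝ^d an H-Hölder continuous function, and E ⊆ I, F ⊆ ℝ^d compact sets with 0 < dim(F) ≤ \overline{dim}_M(F) < d. Then for all γ, γ' with 0 < γ < dim(F) ≤ \overline{dim}_M(F) < γ' < d there exists a constant c ≥ 1 (depending on E, F, H, the Hölder constant of f, γ and γ') such that c^{−1} · C^{H(d−γ)}(E) ≤ ℙ{(B^H + f)(E) ∩ F ≠ ∅} ≤ c · ℋ^{H(d−γ')}(E). -/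

import Mathlib

open MeasureTheory Set ENNReal

/-- The `β`-dimensional Hausdorff measure of `G` with respect to the distance
function `ρ`, defined via countable coverings by `ρ`-balls of radii at most `δ`,
letting `δ → 0` (i.e. taking the supremum over `δ > 0`). -/
noncomputable def hMeasure {X : Type*} (ρ : X → X → ℝ) (β : ℝ) (G : Set X) : ℝ≥0∞ :=
  ⨆ (δ : ℝ) (_ : 0 < δ), ⨅ (c : ℕ → X) (r : ℕ → ℝ)
    (_ : ∀ n, 0 < r n ∧ r n ≤ δ) (_ : G ⊆ ⋃ n, {y | ρ y (c n) < r n}),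
    ∑' n, ENNReal.ofReal ((2 * r n) ^ β)

/-- The radial kernel `φ_α` : `r^{-α}` for `α > 0`, `log(e / (r ⊓ 1))` for `α = 0`,
and `1` for `α < 0`. -/
noncomputable def radialKernel (α : ℝ) (r : ℝ) : ℝ≥0∞ :=
  if 0 < α then ENNReal.ofReal r ^ (-α)
  else if α = 0 then ENNReal.ofReal (Real.log (Real.exp 1 / min r 1))
  else 1

/-- The `φ_α`-energy of a measure `μ` with respect to the distance function `ρ`. -/
noncomputable def energy {X : Type*} [MeasurableSpace X] (ρ : X → X → ℝ) (α : ℝ)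
    (μ : MeasureTheory.Measure X) : ℝ≥0∞ :=
  ∫⁻ u, ∫⁻ v, radialKernel α (ρ u v) ∂μ ∂μ

/-- The Bessel–Riesz capacity of order `α` of `G` with respect to the distance
function `ρ`: the reciprocal of the infimum of `φ_α`-energies over probability
measures carried by `G` (equal to `0` if every such energy is infinite). -/
noncomputable def capacity {X : Type*} [MeasurableSpace X] (ρ : X → X → ℝ) (α : ℝ)
    (G : Set X) : ℝ≥0∞ :=
  (⨅ (μ : MeasureTheory.Measure X) (_ : MeasureTheory.IsProbabilityMeasure μ)
    (_ : μ Gᶜ = 0), energy ρ α μ)⁻¹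

/-- The covering number `N_ρ(G, r)`: the smallest number of open `ρ`-balls of
radius `r` needed to cover `G` (`∞` if no finite cover exists). -/
noncomputable def covN {X : Type*} (ρ : X → X → ℝ) (G : Set X) (r : ℝ) : ℝ≥0∞ :=
  ⨅ (s : Finset X) (_ : G ⊆ ⋃ x ∈ s, {y | ρ y x < r}), (s.card : ℝ≥0∞)

/-- The upper Minkowski dimension of `G` with respect to the distance function `ρ`. -/
noncomputable def upMinkDim {X : Type*} (ρ : X → X → ℝ) (G : Set X) : ℝ :=
  Filter.limsup (fun r : ℝ => Real.log (covN ρ G r).toReal / Real.log (1 / r))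
    (nhdsWithin 0 (Set.Ioi 0))

/-- Covariance function of fractional Brownian motion of Hurst index `H`. -/
noncomputable def fbmCov (H s t : ℝ) : ℝ :=
  (|s| ^ (2 * H) + |t| ^ (2 * H) - |t - s| ^ (2 * H)) / 2

/-- `B` is a `d`-dimensional fractional Brownian motion of Hurst index `H` on `[0,1]`
under the probability measure `ℙ`: its coordinates are independent copies of a
real-valued centered Gaussian process with continuous sample paths, starting at `0`,
whose covariance is `fbmCov H`. -/
structure IsFBM {Ω : Type*} [MeasurableSpace Ω] (ℙ : MeasureTheory.Measure Ω)
    (H : ℝ) (d : ℕ) (B : Ω → ℝ → EuclideanSpace ℝ (Fin d)) : Prop where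
  meas : ∀ t : ℝ, Measurable fun ω => B ω t
  cont : ∀ ω, ContinuousOn (fun t => B ω t) (Set.Icc 0 1)
  start : ∀ ω, B ω 0 = 0
  indep : ProbabilityTheory.iIndepFun
      (fun (i : Fin d) (ω : Ω) => fun t : ℝ => B ω t i) ℙ
  gaussian : ∀ i : Fin d, ∀ (n : ℕ) (t : Fin n → ℝ) (a : Fin n → ℝ),
      (∀ j, t j ∈ Set.Icc (0 : ℝ) 1) →
      ∃ v : NNReal, (v : ℝ) = ∑ j, ∑ k, a j * a k * fbmCov H (t j) (t k) ∧
        MeasureTheory.Measure.map (fun ω => ∑ j, a j * B ω (t j) i) ℙ =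
          ProbabilityTheory.gaussianReal 0 v

/-- The parabolic metric `ρ_{d_H}((s,x),(t,y)) = max(|t-s|^H, ‖x-y‖)` on `ℝ × ℝ^d`. -/
noncomputable def parabolicDist (H : ℝ) {d : ℕ}
    (p q : ℝ × EuclideanSpace ℝ (Fin d)) : ℝ :=
  max (|p.1 - q.1| ^ H) (dist p.2 q.2)

/-- `f` is `γ`-Hölder continuous on `s`. -/
def HolderWithExp {E : Type*} [NormedAddCommGroup E] (f : ℝ → E) (γ : ℝ) (s : Set ℝ) : Prop :=
  ∃ K : ℝ, ∀ x ∈ s, ∀ y ∈ s, ‖f x - f y‖ ≤ K * |x - y| ^ γ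

/-!
Lower bound: put a Frostman measure `ν` on `F` and let `μ` be any probability measure carried by
`E`. The `μ × ν`-mass of the pairs `(t, x)` with `B t + f t` within `ε` of `x` has mean at least of
order `ε ^ d`. Because `f` is `H`-Hölder, the drift does not spoil the two-point estimate
`ε ^ (2 * d) / max (|t - s| ^ H) (dist x y) ^ d`, and integrating `y` against `ν` turns it into the
kernel `|t - s| ^ (-(H * (d - γ)))`. So the second moment is at most of order `ε ^ (2 * d)` times
the `H * (d - γ)`-energy of `μ`; Cauchy–Schwarz bounds from below the probability that the mass is
nonzero, uniformly in `ε`, and compactness of `E` and `F` lets `ε → 0`.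

Upper bound: during an interval of length `r`, `B + f` moves by at most `A * r ^ θ` outside an event
of probability smaller than any given power of `r`, for each `θ < H`. Hence if `F` is hit then the
process at one fixed time of the interval is close to one of at most `r ^ (-θ * g)` points, for any
`g > upMinkDim F`, and the bounded density of the process makes this an event of probability of
order `r ^ (θ * (d - g))`. Some `θ < H` and `g < γ'` satisfy `θ * (d - g) = H * (d - γ')`, and the
bounds are summed over a cover of `E`.
-/

section GaussianEstimates

open ProbabilityTheory

lemma two_le_sqrt_two_mul_pi : 2 ≤ √(2 * Real.pi) :=
  Real.le_sqrt_of_sq_le (by linarith [Real.pi_gt_three])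

lemma sqrt_two_mul_pi_le_four : √(2 * Real.pi) ≤ 4 :=
  (Real.sqrt_le_left (by norm_num)).2 (by linarith [Real.pi_le_four])

lemma gaussianPDFReal_zero_le (v : NNReal) (x : ℝ) :
    gaussianPDFReal 0 v x ≤ (2 * √v)⁻¹ * Real.exp (-x ^ 2 / (2 * v)) := by
  obtain rfl | hv := eq_or_ne v 0
  · simp [gaussianPDFReal]
  rw [gaussianPDFReal, sub_zero, Real.sqrt_mul (by positivity)]
  gcongr
  exact two_le_sqrt_two_mul_pi

lemma le_gaussianPDFReal_zero {v : NNReal} (hv : v ≠ 0) (x : ℝ) :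
    (4 * √v)⁻¹ * Real.exp (-x ^ 2 / (2 * v)) ≤ gaussianPDFReal 0 v x := by
  rw [gaussianPDFReal, sub_zero, Real.sqrt_mul (by positivity)]
  gcongr
  exact sqrt_two_mul_pi_le_four

lemma gaussianReal_closedBall_le {v : NNReal} (hv : v ≠ 0) (y η : ℝ) :
    gaussianReal 0 v (Metric.closedBall y η) ≤ ENNReal.ofReal (η / √v) := by
  rw [gaussianReal_apply 0 hv]
  calc ∫⁻ x in Metric.closedBall y η, gaussianPDF 0 v x
      ≤ ∫⁻ _ in Metric.closedBall y η, ENNReal.ofReal (2 * √v)⁻¹ := by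
        refine lintegral_mono fun x ↦ ENNReal.ofReal_le_ofReal ?_
        refine (gaussianPDFReal_zero_le v x).trans (mul_le_of_le_one_right (by positivity) ?_)
        exact Real.exp_le_one_iff.2
          (div_nonpos_of_nonpos_of_nonneg (neg_nonpos.2 (sq_nonneg x)) (by positivity))
    _ = ENNReal.ofReal (η / √v) := by
        rw [setLIntegral_const, Real.volume_closedBall, ← ENNReal.ofReal_mul (by positivity)]
        congr 1
        ring

lemma le_gaussianReal_closedBall {v : NNReal} {v₀ : ℝ} (hv₀ : 0 < v₀) (hv : v₀ ≤ v) (hv1 : v ≤ 1)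
    {M y η : ℝ} (hη : η ≤ 1) (hy : |y| ≤ M) :
    ENNReal.ofReal (Real.exp (-(M + 1) ^ 2 / (2 * v₀)) / 2 * η) ≤
      gaussianReal 0 v (Metric.closedBall y η) := by
  have hvpos : 0 < v := NNReal.coe_pos.1 (hv₀.trans_le hv)
  have hsqrt : √(v : ℝ) ≤ 1 := Real.sqrt_le_one.2 (by exact_mod_cast hv1)
  rw [gaussianReal_apply 0 hvpos.ne']
  calc ENNReal.ofReal (Real.exp (-(M + 1) ^ 2 / (2 * v₀)) / 2 * η)
      = ∫⁻ _ in Metric.closedBall y η,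
          ENNReal.ofReal (4⁻¹ * Real.exp (-(M + 1) ^ 2 / (2 * v₀))) := by
        rw [setLIntegral_const, Real.volume_closedBall, ← ENNReal.ofReal_mul (by positivity)]
        congr 1
        ring
    _ ≤ ∫⁻ x in Metric.closedBall y η, gaussianPDF 0 v x := by
        refine setLIntegral_mono (measurable_gaussianPDF 0 v) fun x hx ↦
          ENNReal.ofReal_le_ofReal (le_trans ?_ (le_gaussianPDFReal_zero hvpos.ne' x))
        rw [Metric.mem_closedBall, Real.dist_eq] at hx
        have hxM : x ^ 2 ≤ (M + 1) ^ 2 := sq_le_sq.2 <| calc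
          |x| ≤ |x - y| + |y| := by simpa using abs_add_le (x - y) y
          _ ≤ |M + 1| := by linarith [le_abs_self (M + 1)]
        rw [neg_div, neg_div]
        gcongr
        exact mul_le_of_le_one_right (by norm_num) hsqrt

lemma sq_sub_div_le {v u : ℝ} (hv : 0 < v) (hu : 0 < u) (c x w : ℝ) :
    (c * x - w) ^ 2 / (c ^ 2 * v + u) ≤ x ^ 2 / v + w ^ 2 / u := by
  rw [div_add_div _ _ hv.ne' hu.ne', div_le_div_iff₀ (by positivity) (by positivity)]
  nlinarith [sq_nonneg (c * v * w + u * x)]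

lemma gaussianPDFReal_mul_gaussianPDFReal_le {v u : NNReal} (hv : v ≠ 0) (hu : u ≠ 0)
    (c x w : ℝ) :
    gaussianPDFReal 0 v x * gaussianPDFReal 0 u w ≤
      (4 * (√v * √u))⁻¹ * Real.exp (-(c * x - w) ^ 2 / (2 * (c ^ 2 * v + u))) := by
  calc gaussianPDFReal 0 v x * gaussianPDFReal 0 u w
      ≤ ((2 * √v)⁻¹ * Real.exp (-x ^ 2 / (2 * v))) *
          ((2 * √u)⁻¹ * Real.exp (-w ^ 2 / (2 * u))) := by
        gcongr
        · exact gaussianPDFReal_nonneg 0 u w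
        · exact gaussianPDFReal_zero_le v x
        · exact gaussianPDFReal_zero_le u w
    _ = (4 * (√v * √u))⁻¹ * Real.exp (-(x ^ 2 / v + w ^ 2 / u) / 2) := by
        rw [mul_mul_mul_comm, ← Real.exp_add, ← mul_inv]
        congr 2 <;> ring
    _ ≤ _ := by
        have := sq_sub_div_le (v := v) (u := u) (by positivity) (by positivity) c x w
        rw [mul_comm 2 (c ^ 2 * (v : ℝ) + u), ← div_div, neg_div _ ((c * x - w) ^ 2)]
        gcongr

lemma prod_gaussianReal_apply {v u : NNReal} (hv : v ≠ 0) (hu : u ≠ 0) {S : Set (ℝ × ℝ)}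
    (hS : MeasurableSet S) :
    (gaussianReal 0 v).prod (gaussianReal 0 u) S =
      ∫⁻ p in S, gaussianPDF 0 v p.1 * gaussianPDF 0 u p.2 := by
  rw [gaussianReal_of_var_ne_zero 0 hv, gaussianReal_of_var_ne_zero 0 hu,
    prod_withDensity (measurable_gaussianPDF 0 v) (measurable_gaussianPDF 0 u),
    withDensity_apply _ hS, Measure.volume_eq_prod]

lemma measurePreserving_shear (κ : ℝ) :
    MeasurePreserving (fun p : ℝ × ℝ ↦ (p.1, κ * p.1 + p.2)) :=
  (MeasurePreserving.id volume).skew_product (g := fun x w ↦ κ * x + w) (by fun_prop)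
    (ae_of_all _ fun x ↦ (measurePreserving_add_left volume (κ * x)).map_eq)

lemma prod_gaussianReal_shear_closedBall_le {v u : NNReal} (hv : v ≠ 0) (hu : u ≠ 0)
    (κ y z : ℝ) {η : ℝ} (hη : 0 ≤ η) :
    (gaussianReal 0 v).prod (gaussianReal 0 u)
        ((fun p : ℝ × ℝ ↦ (p.1, κ * p.1 + p.2)) ⁻¹' Metric.closedBall (y, z) η) ≤
      ENNReal.ofReal (η ^ 2 / (√v * √u) *
        Real.exp (-(max (|y - z| - 2 * η) 0) ^ 2 / (2 * ((1 - κ) ^ 2 * v + u)))) := by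
  set S := (fun p : ℝ × ℝ ↦ (p.1, κ * p.1 + p.2)) ⁻¹' Metric.closedBall (y, z) η with hS
  set D := max (|y - z| - 2 * η) 0
  have hSmeas : MeasurableSet S :=
    (measurePreserving_shear κ).measurable Metric.isClosed_closedBall.measurableSet
  have hvol : volume S = ENNReal.ofReal (2 * η) * ENNReal.ofReal (2 * η) := by
    rw [(measurePreserving_shear κ).measure_preimage
      Metric.isClosed_closedBall.measurableSet.nullMeasurableSet, ← closedBall_prod_same,
      Measure.volume_eq_prod, Measure.prod_prod, Real.volume_closedBall, Real.volume_closedBall]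
  have hD {p : ℝ × ℝ} (hp : p ∈ S) : D ^ 2 ≤ ((1 - κ) * p.1 - p.2) ^ 2 := by
    rw [hS, mem_preimage, ← closedBall_prod_same, mem_prod, Metric.mem_closedBall,
      Metric.mem_closedBall, Real.dist_eq, Real.dist_eq, abs_sub_comm] at hp
    refine sq_le_sq.2 ((abs_of_nonneg (le_max_right _ _)).trans_le (max_le ?_ (abs_nonneg _)))
    calc |y - z| - 2 * η
        = |(y - p.1) + ((1 - κ) * p.1 - p.2) + (κ * p.1 + p.2 - z)| - 2 * η := by ring_nf
      _ ≤ |y - p.1| + |(1 - κ) * p.1 - p.2| + |κ * p.1 + p.2 - z| - 2 * η := by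
        gcongr; exact abs_add_three _ _ _
      _ ≤ _ := by linarith [hp.1, hp.2]
  rw [prod_gaussianReal_apply hv hu hSmeas]
  calc ∫⁻ p in S, gaussianPDF 0 v p.1 * gaussianPDF 0 u p.2
      ≤ ∫⁻ _ in S, ENNReal.ofReal ((4 * (√v * √u))⁻¹ *
          Real.exp (-D ^ 2 / (2 * ((1 - κ) ^ 2 * v + u)))) := by
        refine setLIntegral_mono measurable_const fun p hp ↦ ?_
        rw [gaussianPDF, gaussianPDF, ← ENNReal.ofReal_mul (gaussianPDFReal_nonneg 0 v _)]
        refine ENNReal.ofReal_le_ofReal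
          ((gaussianPDFReal_mul_gaussianPDFReal_le hv hu (1 - κ) p.1 p.2).trans ?_)
        have := hD hp
        gcongr
    _ = _ := by
        rw [setLIntegral_const, hvol, ← ENNReal.ofReal_mul (by positivity),
          ← ENNReal.ofReal_mul (by positivity)]
        congr 1
        ring

lemma pow_mul_exp_neg_sq_div_eight_le (k : ℕ) {u : ℝ} (hu : 0 ≤ u) :
    u ^ k * Real.exp (-u ^ 2 / 8) ≤ k.factorial * Real.exp 2 := by
  have hpow : u ^ k ≤ k.factorial * Real.exp u := by
    have := Real.pow_div_factorial_le_exp u hu k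
    rwa [div_le_iff₀' (by positivity)] at this
  calc u ^ k * Real.exp (-u ^ 2 / 8)
      ≤ k.factorial * Real.exp u * Real.exp (-u ^ 2 / 8) := by gcongr
    _ = k.factorial * Real.exp (u - u ^ 2 / 8) := by
        rw [mul_assoc, ← Real.exp_add]
        ring_nf
    _ ≤ k.factorial * Real.exp 2 := by
        gcongr
        nlinarith [sq_nonneg (u - 4)]

lemma eLpNorm_id_gaussianReal (v : NNReal) (p : ℝ≥0∞) :
    eLpNorm id p (gaussianReal 0 v) =
      ENNReal.ofReal √v * eLpNorm id p (gaussianReal 0 1) := by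
  have hmap : gaussianReal 0 v = (gaussianReal 0 1).map (fun x ↦ √v * x) := by
    rw [gaussianReal_map_const_mul, mul_zero, mul_one]
    congr 1
    exact NNReal.eq (Real.sq_sqrt v.coe_nonneg).symm
  rw [hmap, eLpNorm_map_measure aestronglyMeasurable_id (by fun_prop)]
  have := eLpNorm_const_smul (√(v : ℝ)) (id : ℝ → ℝ) p (gaussianReal 0 1)
  rwa [Real.enorm_of_nonneg (Real.sqrt_nonneg _)] at this

lemma exists_gaussianReal_tail_le {p : ℝ} (hp : 0 < p) :
    ∃ C : ℝ, 0 ≤ C ∧ ∀ (v : NNReal) {l : ℝ}, 0 < l →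
      gaussianReal 0 v {x | l ≤ |x|} ≤ ENNReal.ofReal (C * (√v / l) ^ p) := by
  set K := eLpNorm id (ENNReal.ofReal p) (gaussianReal 0 1) with hK
  have hKtop : K ≠ ∞ := (memLp_id_gaussianReal' _ ENNReal.ofReal_ne_top).eLpNorm_ne_top
  refine ⟨K.toReal ^ p, by positivity, fun v l hl ↦ ?_⟩
  have hmarkov := meas_ge_le_mul_pow_eLpNorm_enorm (gaussianReal 0 v)
    (ENNReal.ofReal_pos.2 hp).ne' ENNReal.ofReal_ne_top aestronglyMeasurable_id
    (ENNReal.ofReal_pos.2 hl).ne' (fun h ↦ absurd h ENNReal.ofReal_ne_top)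
  rw [eLpNorm_id_gaussianReal, ← hK, ENNReal.toReal_ofReal hp.le] at hmarkov
  have hset : {x : ℝ | l ≤ |x|} = {x | ENNReal.ofReal l ≤ ‖id x‖ₑ} := by
    ext x
    simp [Real.enorm_eq_ofReal_abs]
  rw [hset]
  refine hmarkov.trans_eq ?_
  rw [ENNReal.ofReal_mul (by positivity), ← ENNReal.ofReal_rpow_of_nonneg (by positivity) hp.le,
    ← ENNReal.ofReal_rpow_of_nonneg (by positivity) hp.le, ENNReal.ofReal_toReal hKtop,
    ENNReal.ofReal_div_of_pos hl, ← ENNReal.mul_rpow_of_nonneg _ _ hp.le,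
    ← ENNReal.mul_rpow_of_nonneg _ _ hp.le, div_eq_mul_inv]
  ring_nf

variable {Ω : Type*} [MeasurableSpace Ω] {P : Measure Ω}

lemma hasGaussianLaw_prodMk_sub_smul {X Y : Ω → ℝ}
    (hXY : HasGaussianLaw (fun ω ↦ (X ω, Y ω)) P) (κ : ℝ) :
    HasGaussianLaw (fun ω ↦ (X ω, (Y - κ • X) ω)) P :=
  hXY.map_fun ((ContinuousLinearMap.fst ℝ ℝ ℝ).prod
    (ContinuousLinearMap.snd ℝ ℝ ℝ - κ • ContinuousLinearMap.fst ℝ ℝ ℝ))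

lemma map_eq_gaussianReal_of_integral_eq_zero {X : Ω → ℝ} (hX : HasGaussianLaw X P)
    (hX0 : P[X] = 0) : P.map X = gaussianReal 0 Var[X; P].toNNReal := by
  rw [hX.map_eq_gaussianReal, hX0]

variable [IsProbabilityMeasure P]

lemma indepFun_sub_regression {X Y : Ω → ℝ} (hXY : HasGaussianLaw (fun ω ↦ (X ω, Y ω)) P)
    (hX : Var[X; P] ≠ 0) : IndepFun X (Y - (cov[X, Y; P] / Var[X; P]) • X) P := by
  have hX2 : MemLp X 2 P := hXY.fst.memLp_two
  refine (hasGaussianLaw_prodMk_sub_smul hXY _).indepFun_of_covariance_eq_zero ?_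
  rw [covariance_sub_right hX2 hXY.snd.memLp_two (hX2.const_smul _), covariance_smul_right,
    covariance_self hX2.aemeasurable]
  field_simp
  ring

lemma variance_mul_variance_sub_regression {X Y : Ω → ℝ} (hX2 : MemLp X 2 P)
    (hY2 : MemLp Y 2 P) (hX : Var[X; P] ≠ 0) :
    Var[X; P] * Var[Y - (cov[X, Y; P] / Var[X; P]) • X; P] =
      Var[X; P] * Var[Y; P] - cov[X, Y; P] ^ 2 := by
  rw [variance_sub hY2 (hX2.const_smul _), covariance_smul_right, variance_smul, covariance_comm]
  field_simp
  ring

lemma measure_abs_sub_le_and_abs_sub_le {X Y : Ω → ℝ}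
    (hXY : HasGaussianLaw (fun ω ↦ (X ω, Y ω)) P) (hX0 : P[X] = 0) (hY0 : P[Y] = 0)
    (hdet : 0 < Var[X; P] * Var[Y; P] - cov[X, Y; P] ^ 2) (y z : ℝ) {η : ℝ} (hη : 0 ≤ η) :
    P {ω | |X ω - y| ≤ η ∧ |Y ω - z| ≤ η} ≤
      ENNReal.ofReal (η ^ 2 / √(Var[X; P] * Var[Y; P] - cov[X, Y; P] ^ 2) *
        Real.exp (-(max (|y - z| - 2 * η) 0) ^ 2 / (2 * Var[X - Y; P]))) := by
  have hX2 : MemLp X 2 P := hXY.fst.memLp_two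
  have hY2 : MemLp Y 2 P := hXY.snd.memLp_two
  have hv : 0 < Var[X; P] := (variance_nonneg X P).lt_of_ne' fun h ↦ by
    rw [h] at hdet
    linarith [sq_nonneg cov[X, Y; P]]
  set κ := cov[X, Y; P] / Var[X; P] with hκ
  set W : Ω → ℝ := Y - κ • X with hW
  have hXW : HasGaussianLaw (fun ω ↦ (X ω, W ω)) P := hasGaussianLaw_prodMk_sub_smul hXY κ
  have hvarW : Var[X; P] * Var[W; P] = Var[X; P] * Var[Y; P] - cov[X, Y; P] ^ 2 :=
    variance_mul_variance_sub_regression hX2 hY2 hv.ne'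
  have hu : 0 < Var[W; P] := (pos_iff_pos_of_mul_pos (hvarW ▸ hdet)).1 hv
  have hvarXY : (1 - κ) ^ 2 * Var[X; P] + Var[W; P] = Var[X - Y; P] := by
    rw [eq_div_of_mul_eq hv.ne' ((mul_comm _ _).trans hvarW), variance_sub hX2 hY2, hκ]
    field_simp
    ring
  have hW0 : P[W] = 0 := by
    have hX1 := hX2.integrable one_le_two
    have hY1 := hY2.integrable one_le_two
    rw [hW, integral_sub' hY1 (hX1.smul κ), hY0, zero_sub, neg_eq_zero]
    simp only [Pi.smul_apply, integral_smul, hX0, smul_zero]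
  have hlaw : P.map (fun ω ↦ (X ω, W ω)) =
      (gaussianReal 0 Var[X; P].toNNReal).prod (gaussianReal 0 Var[W; P].toNNReal) := by
    rw [(indepFun_iff_map_prod_eq_prod_map_map hX2.aemeasurable hXW.snd.aemeasurable).1
      (indepFun_sub_regression hXY hv.ne'), map_eq_gaussianReal_of_integral_eq_zero hXW.fst hX0,
      map_eq_gaussianReal_of_integral_eq_zero hXW.snd hW0]
  have hbox : {ω | |X ω - y| ≤ η ∧ |Y ω - z| ≤ η} = (fun ω ↦ (X ω, W ω)) ⁻¹'
      ((fun p : ℝ × ℝ ↦ (p.1, κ * p.1 + p.2)) ⁻¹' Metric.closedBall (y, z) η) := by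
    ext ω
    simp [hW, ← closedBall_prod_same, Real.dist_eq]
  rw [hbox, ← Measure.map_apply_of_aemeasurable hXW.aemeasurable
    ((measurePreserving_shear κ).measurable Metric.isClosed_closedBall.measurableSet), hlaw]
  have := prod_gaussianReal_shear_closedBall_le (Real.toNNReal_pos.2 hv).ne'
    (Real.toNNReal_pos.2 hu).ne' κ y z hη
  rwa [Real.coe_toNNReal _ hv.le, Real.coe_toNNReal _ hu.le, ← Real.sqrt_mul hv.le, hvarW,
    hvarXY] at this

end GaussianEstimates

section FractionalBrownianMotion

open ProbabilityTheory

lemma rpow_sub_rpow_le {H a s t : ℝ} (hH : H ∈ Ioo 0 1) (ha : 0 < a) (has : a ≤ s) (hst : s ≤ t)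
    (ht : t ≤ 1) : t ^ H - s ^ H ≤ (1 - a) ^ (1 - H) * (t - s) ^ H := by
  have ht0 : 0 < t := ha.trans_le (has.trans hst)
  set u := s / t with hu
  have hau : a ≤ u := (le_div_iff₀ ht0).2 <| (mul_le_of_le_one_right ha.le ht).trans has
  have hu1 : u ≤ 1 := (div_le_one ht0).2 hst
  have hu_rpow : u ≤ u ^ H := by
    simpa using Real.rpow_le_rpow_of_exponent_ge (ha.trans_le hau) hu1 hH.2.le
  have hscaled : 1 - u ^ H ≤ (1 - a) ^ (1 - H) * (1 - u) ^ H := calc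
    1 - u ^ H ≤ 1 - u := by linarith
    _ = (1 - u) ^ (1 - H) * (1 - u) ^ H := by
      rw [← Real.rpow_add' (by linarith) (by norm_num)]
      simp
    _ ≤ (1 - a) ^ (1 - H) * (1 - u) ^ H := by
      have := hH.2.le
      gcongr
  calc t ^ H - s ^ H = t ^ H * (1 - u ^ H) := by
        rw [mul_sub, mul_one, ← Real.mul_rpow ht0.le (ha.le.trans hau), hu,
          mul_div_cancel₀ _ ht0.ne']
    _ ≤ t ^ H * ((1 - a) ^ (1 - H) * (1 - u) ^ H) := by gcongr
    _ = (1 - a) ^ (1 - H) * (t - s) ^ H := by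
        rw [mul_left_comm, ← Real.mul_rpow ht0.le (by linarith), mul_sub, mul_one, hu,
          mul_div_cancel₀ _ ht0.ne']

lemma abs_rpow_sub_rpow_le {H a s t : ℝ} (hH : H ∈ Ioo 0 1) (ha : 0 < a) (hs : s ∈ Icc a 1)
    (ht : t ∈ Icc a 1) : |s ^ H - t ^ H| ≤ (1 - a) ^ (1 - H) * |t - s| ^ H := by
  wlog hst : s ≤ t generalizing s t
  · rw [abs_sub_comm, abs_sub_comm t]
    exact this ht hs (le_of_not_ge hst)
  have hmono : s ^ H ≤ t ^ H := Real.rpow_le_rpow (ha.le.trans hs.1) hst hH.1.le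
  rw [abs_sub_comm, abs_of_nonneg (sub_nonneg.2 hmono), abs_of_nonneg (sub_nonneg.2 hst)]
  exact rpow_sub_rpow_le hH ha hs.1 hst ht.2

lemma abs_sub_rpow_le_max {H s t : ℝ} (hH : 0 ≤ H) (hs : 0 ≤ s) (ht : 0 ≤ t) :
    |t - s| ^ H ≤ max (s ^ H) (t ^ H) := by
  obtain h | h := le_total s t
  · rw [abs_of_nonneg (sub_nonneg.2 h)]
    exact (Real.rpow_le_rpow (sub_nonneg.2 h) (by linarith) hH).trans (le_max_right _ _)
  · rw [abs_of_nonpos (sub_nonpos.2 h)]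
    exact (Real.rpow_le_rpow (by linarith) (by linarith) hH).trans (le_max_left _ _)

lemma mul_sq_le_sq_mul_sq_sub_sq {q α A B ρ : ℝ} (hq : q ≤ 1) (hq0 : 0 ≤ q) (hα : 0 ≤ α)
    (hA : α ≤ A) (hB : α ≤ B) (hAB : |A - B| ≤ q * ρ) (hρ : 0 ≤ ρ) (hρAB : ρ ≤ max A B) :
    (1 - q ^ 2) * α ^ 2 / 4 * ρ ^ 2 ≤ A ^ 2 * B ^ 2 - ((A ^ 2 + B ^ 2 - ρ ^ 2) / 2) ^ 2 := by
  have hdiff : (1 - q ^ 2) * ρ ^ 2 ≤ ρ ^ 2 - (A - B) ^ 2 := by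
    have : (A - B) ^ 2 ≤ (q * ρ) ^ 2 := sq_le_sq.2 (hAB.trans (le_abs_self _))
    linarith
  have hsum : α ^ 2 ≤ (A + B) ^ 2 - ρ ^ 2 := by
    obtain h | h := le_max_iff.1 hρAB <;> nlinarith
  have hq2 : 0 ≤ 1 - q ^ 2 := sub_nonneg.2 (pow_le_one₀ hq0 hq)
  calc (1 - q ^ 2) * α ^ 2 / 4 * ρ ^ 2
      = (1 - q ^ 2) * ρ ^ 2 * α ^ 2 / 4 := by ring
    _ ≤ (ρ ^ 2 - (A - B) ^ 2) * ((A + B) ^ 2 - ρ ^ 2) / 4 := by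
        have hdiff0 := (by positivity : 0 ≤ (1 - q ^ 2) * ρ ^ 2).trans hdiff
        gcongr
    _ = A ^ 2 * B ^ 2 - ((A ^ 2 + B ^ 2 - ρ ^ 2) / 2) ^ 2 := by ring

lemma exists_dist_le_sqrt_card_mul {ι : Type*} [Fintype ι] [Nonempty ι]
    (x y : EuclideanSpace ℝ ι) : ∃ i, dist x y ≤ √(Fintype.card ι) * |x i - y i| := by
  obtain ⟨i, -, hi⟩ := Finset.exists_max_image Finset.univ (fun i ↦ |x i - y i|)
    Finset.univ_nonempty
  refine ⟨i, ?_⟩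
  rw [EuclideanSpace.dist_eq, ← Real.sqrt_sq (abs_nonneg (x i - y i)),
    ← Real.sqrt_mul (Nat.cast_nonneg _)]
  refine Real.sqrt_le_sqrt ?_
  calc ∑ j, dist (x j) (y j) ^ 2 ≤ ∑ _j : ι, |x i - y i| ^ 2 := by
        gcongr with j
        exact hi j (Finset.mem_univ j)
    _ = Fintype.card ι * |x i - y i| ^ 2 := by simp

lemma exp_neg_sq_div_le_one (x ρ : ℝ) : Real.exp (-x ^ 2 / (2 * ρ ^ 2)) ≤ 1 :=
  Real.exp_le_one_iff.2
    (div_nonpos_of_nonpos_of_nonneg (neg_nonpos.2 (sq_nonneg x)) (by positivity))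

lemma pow_mul_exp_neg_max_sub_sq_le (k : ℕ) {x ρ η : ℝ} (hρ : 0 < ρ) (hη : 0 ≤ η)
    (hx : 4 * η ≤ x) :
    (x / ρ) ^ k * Real.exp (-(max (x - 2 * η) 0) ^ 2 / (2 * ρ ^ 2)) ≤
      k.factorial * Real.exp 2 := by
  have hx0 : 0 ≤ x := by linarith
  refine le_trans ?_ (pow_mul_exp_neg_sq_div_eight_le k (by positivity : 0 ≤ x / ρ))
  have hmax : x / 2 ≤ max (x - 2 * η) 0 := le_max_of_le_left (by linarith)
  calc (x / ρ) ^ k * Real.exp (-(max (x - 2 * η) 0) ^ 2 / (2 * ρ ^ 2))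
      ≤ (x / ρ) ^ k * Real.exp (-(x / 2) ^ 2 / (2 * ρ ^ 2)) := by
        rw [neg_div, neg_div]
        gcongr
    _ = (x / ρ) ^ k * Real.exp (-(x / ρ) ^ 2 / 8) := by
        congr 2
        field_simp
        ring

namespace IsFBM

variable {Ω : Type*} [MeasurableSpace Ω] {P : Measure Ω} {H : ℝ} {d : ℕ}
  {B : Ω → ℝ → EuclideanSpace ℝ (Fin d)}

lemma measurable_coord (hB : IsFBM P H d B) (t : ℝ) (i : Fin d) :
    Measurable fun ω ↦ B ω t i :=
  (EuclideanSpace.proj (𝕜 := ℝ) i).continuous.measurable.comp (hB.meas t)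

lemma hasLaw_linearCombination (hB : IsFBM P H d B) (hH : 0 < H) {s t : ℝ} (hs : s ∈ Icc 0 1)
    (ht : t ∈ Icc 0 1) (i : Fin d) (p q : ℝ) :
    HasLaw (fun ω ↦ p * B ω s i + q * B ω t i)
      (gaussianReal 0 (p ^ 2 * (s ^ H) ^ 2 + q ^ 2 * (t ^ H) ^ 2 +
        p * q * ((s ^ H) ^ 2 + (t ^ H) ^ 2 - (|t - s| ^ H) ^ 2)).toNNReal) P where
  aemeasurable :=
    (((hB.measurable_coord s i).const_mul p).add
      ((hB.measurable_coord t i).const_mul q)).aemeasurable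
  map_eq := by
    obtain ⟨v, hv, hmap⟩ := hB.gaussian i 2 ![s, t] ![p, q] fun j ↦ by fin_cases j <;> simpa
    have hsq {r : ℝ} (hr : 0 ≤ r) : r ^ (2 * H) = (r ^ H) ^ 2 := by
      rw [mul_comm, Real.rpow_mul hr, Real.rpow_two]
    have hv' : v = (p ^ 2 * (s ^ H) ^ 2 + q ^ 2 * (t ^ H) ^ 2 +
        p * q * ((s ^ H) ^ 2 + (t ^ H) ^ 2 - (|t - s| ^ H) ^ 2)).toNNReal := by
      rw [← Real.toNNReal_coe (r := v), hv]
      simp only [Fin.sum_univ_two, fbmCov, Matrix.cons_val_zero, Matrix.cons_val_one, sub_self,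
        abs_zero, Real.zero_rpow (by positivity : 2 * H ≠ 0), abs_of_nonneg hs.1,
        abs_of_nonneg ht.1, abs_sub_comm s t]
      rw [hsq (abs_nonneg _), hsq hs.1, hsq ht.1]
      congr 1
      ring
    rw [← hv', ← hmap]
    simp [Fin.sum_univ_two]

lemma hasLaw_coord (hB : IsFBM P H d B) (hH : 0 < H) {t : ℝ} (ht : t ∈ Icc 0 1) (i : Fin d) :
    HasLaw (fun ω ↦ B ω t i) (gaussianReal 0 ((t ^ H) ^ 2).toNNReal) P := by
  simpa using hB.hasLaw_linearCombination hH ht ht i 1 0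

lemma hasLaw_coord_sub_coord (hB : IsFBM P H d B) (hH : 0 < H) {s t : ℝ} (hs : s ∈ Icc 0 1)
    (ht : t ∈ Icc 0 1) (i : Fin d) :
    HasLaw (fun ω ↦ B ω s i - B ω t i) (gaussianReal 0 ((|t - s| ^ H) ^ 2).toNNReal) P := by
  convert hB.hasLaw_linearCombination hH hs ht i 1 (-1) using 1
  · ext ω
    ring
  · ring_nf

lemma hasGaussianLaw_coord_prodMk (hB : IsFBM P H d B) (hH : 0 < H)
    {s t : ℝ} (hs : s ∈ Icc 0 1) (ht : t ∈ Icc 0 1) (i : Fin d) :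
    HasGaussianLaw (fun ω ↦ (B ω s i, B ω t i)) P := by
  have hmeas : Measurable fun ω ↦ (B ω s i, B ω t i) :=
    (hB.measurable_coord s i).prodMk (hB.measurable_coord t i)
  refine ⟨isGaussian_of_map_eq_gaussianReal fun L ↦ ?_⟩
  have hL : (L ∘ fun ω ↦ (B ω s i, B ω t i)) =
      fun ω ↦ L (1, 0) * B ω s i + L (0, 1) * B ω t i := by
    ext ω
    rw [Function.comp_apply, mul_comm, mul_comm (L (0, 1)), ← smul_eq_mul, ← smul_eq_mul,
      ← map_smul, ← map_smul, ← map_add]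
    simp
  exact ⟨0, _, by
    rw [Measure.map_map L.continuous.measurable hmeas, hL,
      (hB.hasLaw_linearCombination hH hs ht i _ _).map_eq]⟩

lemma integral_coord (hB : IsFBM P H d B) (hH : 0 < H) {t : ℝ} (ht : t ∈ Icc 0 1) (i : Fin d) :
    ∫ ω, B ω t i ∂P = 0 := by
  rw [(hB.hasLaw_coord hH ht i).integral_eq, integral_id_gaussianReal]

lemma variance_coord (hB : IsFBM P H d B) (hH : 0 < H) {t : ℝ} (ht : t ∈ Icc 0 1) (i : Fin d) :
    Var[fun ω ↦ B ω t i; P] = (t ^ H) ^ 2 := by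
  rw [(hB.hasLaw_coord hH ht i).variance_eq, variance_id_gaussianReal,
    Real.coe_toNNReal _ (sq_nonneg _)]

lemma variance_coord_sub_coord (hB : IsFBM P H d B) (hH : 0 < H) {s t : ℝ} (hs : s ∈ Icc 0 1)
    (ht : t ∈ Icc 0 1) (i : Fin d) :
    Var[fun ω ↦ B ω s i - B ω t i; P] = (|t - s| ^ H) ^ 2 := by
  rw [(hB.hasLaw_coord_sub_coord hH hs ht i).variance_eq, variance_id_gaussianReal,
    Real.coe_toNNReal _ (sq_nonneg _)]

lemma covariance_coord [IsFiniteMeasure P] (hB : IsFBM P H d B) (hH : 0 < H) {s t : ℝ}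
    (hs : s ∈ Icc 0 1) (ht : t ∈ Icc 0 1) (i : Fin d) :
    cov[fun ω ↦ B ω s i, fun ω ↦ B ω t i; P] =
      ((s ^ H) ^ 2 + (t ^ H) ^ 2 - (|t - s| ^ H) ^ 2) / 2 := by
  have hlaw := hB.hasGaussianLaw_coord_prodMk hH hs ht i
  have := variance_fun_sub hlaw.fst.memLp_two hlaw.snd.memLp_two
  rw [hB.variance_coord hH hs, hB.variance_coord hH ht, hB.variance_coord_sub_coord hH hs ht]
    at this
  linarith

lemma measure_forall_coord_eq_prod (hB : IsFBM P H d B) {p : Fin d → (ℝ → ℝ) → Prop}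
    (hp : ∀ i, MeasurableSet {g | p i g}) :
    P {ω | ∀ i, p i fun t ↦ B ω t i} = ∏ i, P {ω | p i fun t ↦ B ω t i} := by
  have := hB.indep.measure_inter_preimage_eq_mul Finset.univ (sets := fun i ↦ {g | p i g})
    fun i _ ↦ hp i
  simpa [preimage, ← ofPred_forall] using this

lemma exists_measure_coord_pair_le [IsProbabilityMeasure P] (hB : IsFBM P H d B)
    (hH : H ∈ Ioo 0 1) {a : ℝ} (ha : 0 < a) :
    ∃ K : ℝ, 0 ≤ K ∧ ∀ s ∈ Icc a 1, ∀ t ∈ Icc a 1, s ≠ t → ∀ (i : Fin d) (y z : ℝ) {η : ℝ},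
      0 ≤ η → P {ω | |B ω s i - y| ≤ η ∧ |B ω t i - z| ≤ η} ≤
        ENNReal.ofReal (K * (η ^ 2 / |t - s| ^ H) *
          Real.exp (-(max (|y - z| - 2 * η) 0) ^ 2 / (2 * (|t - s| ^ H) ^ 2))) := by
  set q := (1 - a) ^ (1 - H)
  set c := (1 - q ^ 2) * (a ^ H) ^ 2 / 4
  refine ⟨(√c)⁻¹, by positivity, fun s hs t ht hst i y z η hη ↦ ?_⟩
  have ha1 : a ≤ 1 := hs.1.trans hs.2
  have hs01 : s ∈ Icc (0 : ℝ) 1 := ⟨ha.le.trans hs.1, hs.2⟩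
  have ht01 : t ∈ Icc (0 : ℝ) 1 := ⟨ha.le.trans ht.1, ht.2⟩
  have hρ : 0 < |t - s| ^ H := Real.rpow_pos_of_pos (abs_pos.2 (sub_ne_zero.2 hst.symm)) H
  have hq0 : 0 ≤ q := Real.rpow_nonneg (sub_nonneg.2 ha1) _
  have hq1 : q < 1 := Real.rpow_lt_one (sub_nonneg.2 ha1) (by linarith) (sub_pos.2 hH.2)
  have hc : 0 < c := by
    have := sub_pos.2 (pow_lt_one₀ hq0 hq1 two_ne_zero)
    positivity
  have hdet : c * (|t - s| ^ H) ^ 2 ≤ Var[fun ω ↦ B ω s i; P] * Var[fun ω ↦ B ω t i; P] -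
      cov[fun ω ↦ B ω s i, fun ω ↦ B ω t i; P] ^ 2 := by
    rw [hB.variance_coord hH.1 hs01, hB.variance_coord hH.1 ht01,
      hB.covariance_coord hH.1 hs01 ht01]
    exact mul_sq_le_sq_mul_sq_sub_sq hq1.le hq0 (by positivity)
      (Real.rpow_le_rpow ha.le hs.1 hH.1.le) (Real.rpow_le_rpow ha.le ht.1 hH.1.le)
      (abs_rpow_sub_rpow_le hH ha hs ht) hρ.le (abs_sub_rpow_le_max hH.1.le hs01.1 ht01.1)
  refine (measure_abs_sub_le_and_abs_sub_le (hB.hasGaussianLaw_coord_prodMk hH.1 hs01 ht01 i)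
    (hB.integral_coord hH.1 hs01 i) (hB.integral_coord hH.1 ht01 i)
    (lt_of_lt_of_le (by positivity) hdet) y z hη).trans (ENNReal.ofReal_le_ofReal ?_)
  rw [← hB.variance_coord_sub_coord hH.1 hs01 ht01 i]
  refine mul_le_mul_of_nonneg_right ?_ (Real.exp_pos _).le
  calc _ ≤ η ^ 2 / √(c * (|t - s| ^ H) ^ 2) := by gcongr
    _ = (√c)⁻¹ * (η ^ 2 / |t - s| ^ H) := by
      rw [Real.sqrt_mul hc.le, Real.sqrt_sq hρ.le, div_mul_eq_div_div, div_right_comm,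
        div_eq_inv_mul _ (√c)]

lemma measure_forall_abs_coord_sub_le (hB : IsFBM P H d B) (hH : 0 < H) {a t : ℝ} (ha : 0 < a)
    (ht : t ∈ Icc a 1) (y : EuclideanSpace ℝ (Fin d)) {η : ℝ} (hη : 0 ≤ η) :
    P {ω | ∀ i, |B ω t i - y i| ≤ η} ≤ ENNReal.ofReal ((η / a ^ H) ^ d) := by
  have ht0 : 0 < t := ha.trans_le ht.1
  have htH : 0 < t ^ H := Real.rpow_pos_of_pos ht0 H
  have haH : 0 < a ^ H := Real.rpow_pos_of_pos ha H
  have hcoord (i : Fin d) : P {ω | |B ω t i - y i| ≤ η} ≤ ENNReal.ofReal (η / a ^ H) := by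
    rw [(hB.hasLaw_coord hH ⟨ht0.le, ht.2⟩ i).measure_eq (p := fun x ↦ |x - y i| ≤ η)
      (measurableSet_le (by fun_prop) (by fun_prop))]
    have hsqrt : √(((t ^ H) ^ 2).toNNReal : ℝ) = t ^ H := by
      rw [Real.coe_toNNReal _ (sq_nonneg _), Real.sqrt_sq htH.le]
    refine (gaussianReal_closedBall_le (Real.toNNReal_pos.2 (by positivity)).ne' _ η).trans
      (ENNReal.ofReal_le_ofReal ?_)
    rw [hsqrt]
    exact div_le_div_of_nonneg_left hη haH (Real.rpow_le_rpow ha.le ht.1 hH.le)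
  rw [hB.measure_forall_coord_eq_prod (p := fun i g ↦ |g t - y i| ≤ η)
    fun i ↦ measurableSet_le (by fun_prop) (by fun_prop)]
  exact (Finset.prod_le_prod' fun i _ ↦ hcoord i).trans_eq
    (by simp [ENNReal.ofReal_pow (div_nonneg hη haH.le)])

lemma exists_le_measure_forall_abs_coord_sub_le (hB : IsFBM P H d B) (hH : 0 < H) {a : ℝ}
    (ha : 0 < a) (M : ℝ) :
    ∃ c : ℝ, 0 < c ∧ ∀ t ∈ Icc a 1, ∀ (y : EuclideanSpace ℝ (Fin d)) {η : ℝ},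
      (∀ i, |y i| ≤ M) → 0 ≤ η → η ≤ 1 →
      ENNReal.ofReal ((c * η) ^ d) ≤ P {ω | ∀ i, |B ω t i - y i| ≤ η} := by
  have haH : 0 < a ^ H := Real.rpow_pos_of_pos ha H
  refine ⟨Real.exp (-(M + 1) ^ 2 / (2 * (a ^ H) ^ 2)) / 2, by positivity,
    fun t ht y η hy hη hη1 ↦ ?_⟩
  have ht0 : 0 < t := ha.trans_le ht.1
  have hcoord (i : Fin d) : ENNReal.ofReal
      (Real.exp (-(M + 1) ^ 2 / (2 * (a ^ H) ^ 2)) / 2 * η) ≤ P {ω | |B ω t i - y i| ≤ η} := by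
    rw [(hB.hasLaw_coord hH ⟨ht0.le, ht.2⟩ i).measure_eq (p := fun x ↦ |x - y i| ≤ η)
      (measurableSet_le (by fun_prop) (by fun_prop))]
    refine le_gaussianReal_closedBall (by positivity) ?_ ?_ hη1 (hy i)
    · rw [Real.coe_toNNReal _ (sq_nonneg _)]
      exact pow_le_pow_left₀ haH.le (Real.rpow_le_rpow ha.le ht.1 hH.le) 2
    · rw [Real.toNNReal_le_one]
      exact pow_le_one₀ (Real.rpow_nonneg ht0.le _) (Real.rpow_le_one ht0.le ht.2 hH.le)
  rw [hB.measure_forall_coord_eq_prod (p := fun i g ↦ |g t - y i| ≤ η)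
    fun i ↦ measurableSet_le (by fun_prop) (by fun_prop)]
  refine le_trans (le_of_eq ?_) (Finset.prod_le_prod' fun i _ ↦ hcoord i)
  rw [Finset.prod_const, Finset.card_univ, Fintype.card_fin, ENNReal.ofReal_pow (by positivity)]

lemma exists_measure_pair_le_mul_exp [IsProbabilityMeasure P] (hB : IsFBM P H d B)
    (hH : H ∈ Ioo 0 1) {a : ℝ} (ha : 0 < a) :
    ∃ K : ℝ, 0 ≤ K ∧ ∀ s ∈ Icc a 1, ∀ t ∈ Icc a 1, s ≠ t →
      ∀ (y z : EuclideanSpace ℝ (Fin d)) {η : ℝ}, 0 ≤ η →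
      P {ω | ∀ i, |B ω s i - y i| ≤ η ∧ |B ω t i - z i| ≤ η} ≤
        ENNReal.ofReal ((K * (η ^ 2 / |t - s| ^ H)) ^ d *
          ∏ i, Real.exp (-(max (|y i - z i| - 2 * η) 0) ^ 2 / (2 * (|t - s| ^ H) ^ 2))) := by
  obtain ⟨K, hK, hpair⟩ := hB.exists_measure_coord_pair_le hH ha
  refine ⟨K, hK, fun s hs t ht hst y z η hη ↦ ?_⟩
  rw [hB.measure_forall_coord_eq_prod (p := fun i g ↦ |g s - y i| ≤ η ∧ |g t - z i| ≤ η)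
    fun i ↦ by
      rw [ofPred_and]
      exact (measurableSet_le (by fun_prop) (by fun_prop)).inter
        (measurableSet_le (by fun_prop) (by fun_prop))]
  refine (Finset.prod_le_prod' fun i _ ↦ hpair s hs t ht hst i (y i) (z i) hη).trans_eq ?_
  rw [← ENNReal.ofReal_prod_of_nonneg fun i _ ↦ by positivity, Finset.prod_mul_distrib]
  simp

lemma exists_measure_pair_le_of_four_mul_le [IsProbabilityMeasure P] (hB : IsFBM P H d B)
    (hH : H ∈ Ioo 0 1) {a : ℝ} (ha : 0 < a) :
    ∃ C : ℝ, 0 ≤ C ∧ ∀ s ∈ Icc a 1, ∀ t ∈ Icc a 1, s ≠ t →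
      ∀ (y z : EuclideanSpace ℝ (Fin d)) (i : Fin d) {η : ℝ}, 0 ≤ η → 0 < |y i - z i| →
      4 * η ≤ |y i - z i| → P {ω | ∀ i, |B ω s i - y i| ≤ η ∧ |B ω t i - z i| ≤ η} ≤
        ENNReal.ofReal (C * (η ^ 2 / |y i - z i|) ^ d) := by
  obtain ⟨K, hK, hpair⟩ := hB.exists_measure_pair_le_mul_exp hH ha
  refine ⟨d.factorial * Real.exp 2 * K ^ d, by positivity, fun s hs t ht hst y z i η hη hx hηx ↦
    (hpair s hs t ht hst y z hη).trans (ENNReal.ofReal_le_ofReal ?_)⟩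
  have hρ : 0 < |t - s| ^ H := Real.rpow_pos_of_pos (abs_pos.2 (sub_ne_zero.2 hst.symm)) H
  calc _ ≤ (K * (η ^ 2 / |t - s| ^ H)) ^ d *
        Real.exp (-(max (|y i - z i| - 2 * η) 0) ^ 2 / (2 * (|t - s| ^ H) ^ 2)) := by
        gcongr
        rw [← Finset.mul_prod_erase Finset.univ _ (Finset.mem_univ i)]
        exact mul_le_of_le_one_right (Real.exp_pos _).le (Finset.prod_le_one
          (fun _ _ ↦ (Real.exp_pos _).le) fun j _ ↦ exp_neg_sq_div_le_one _ _)
    _ = (K * (η ^ 2 / |y i - z i|)) ^ d * ((|y i - z i| / |t - s| ^ H) ^ d *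
        Real.exp (-(max (|y i - z i| - 2 * η) 0) ^ 2 / (2 * (|t - s| ^ H) ^ 2))) := by
        rw [← mul_assoc, ← mul_pow]
        congr 2
        field_simp
    _ ≤ (K * (η ^ 2 / |y i - z i|)) ^ d * (d.factorial * Real.exp 2) :=
        mul_le_mul_of_nonneg_left (pow_mul_exp_neg_max_sub_sq_le d hρ hη hηx) (by positivity)
    _ = d.factorial * Real.exp 2 * K ^ d * (η ^ 2 / |y i - z i|) ^ d := by ring

lemma exists_measure_pair_le_of_ne [IsProbabilityMeasure P] (hB : IsFBM P H d B)
    (hH : H ∈ Ioo 0 1) {a : ℝ} (ha : 0 < a) :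
    ∃ C : ℝ, 0 ≤ C ∧ ∀ s ∈ Icc a 1, ∀ t ∈ Icc a 1, s ≠ t →
      ∀ (y z : EuclideanSpace ℝ (Fin d)) {η : ℝ}, 0 ≤ η → y ≠ z →
      P {ω | ∀ i, |B ω s i - y i| ≤ η ∧ |B ω t i - z i| ≤ η} ≤
        ENNReal.ofReal (C * (η ^ 2 / dist y z) ^ d) := by
  obtain ⟨K, hK, hpair⟩ := hB.exists_measure_pair_le_of_four_mul_le hH ha
  have haH : 0 < a ^ H := Real.rpow_pos_of_pos ha H
  refine ⟨K * √d ^ d + (4 * √d / a ^ H) ^ d, by positivity, fun s hs t ht hst y z η hη hyz ↦ ?_⟩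
  have hD : 0 < dist y z := dist_pos.2 hyz
  have : Nonempty (Fin d) := not_isEmpty_iff.1 fun _ ↦ hyz (Subsingleton.elim y z)
  obtain ⟨i, hi⟩ := exists_dist_le_sqrt_card_mul y z
  rw [Fintype.card_fin] at hi
  have hx : 0 < |y i - z i| := pos_of_mul_pos_right (hD.trans_le hi) (Real.sqrt_nonneg _)
  obtain hηx | hηx := le_or_gt (4 * η) |y i - z i|
  · refine (hpair s hs t ht hst y z i hη hx hηx).trans (ENNReal.ofReal_le_ofReal ?_)
    calc K * (η ^ 2 / |y i - z i|) ^ d ≤ K * (√d * (η ^ 2 / dist y z)) ^ d := by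
          gcongr
          rw [← mul_div_assoc, div_le_div_iff₀ hx hD]
          linarith [mul_le_mul_of_nonneg_left hi (sq_nonneg η)]
      _ = K * √d ^ d * (η ^ 2 / dist y z) ^ d := by rw [mul_pow, mul_assoc]
      _ ≤ _ := by gcongr; exact le_add_of_nonneg_right (by positivity)
  · refine ((measure_mono fun ω hω i ↦ (hω i).1).trans
      (hB.measure_forall_abs_coord_sub_le hH.1 ha hs y hη)).trans (ENNReal.ofReal_le_ofReal ?_)
    have hDη : dist y z ≤ 4 * √d * η := by
      linarith [mul_le_mul_of_nonneg_left hηx.le (Real.sqrt_nonneg d)]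
    calc (η / a ^ H) ^ d ≤ (4 * √d / a ^ H * (η ^ 2 / dist y z)) ^ d := by
          gcongr
          rw [div_mul_div_comm, div_le_div_iff₀ haH (by positivity)]
          linarith [mul_le_mul_of_nonneg_left hDη (by positivity : 0 ≤ η * a ^ H)]
      _ = (4 * √d / a ^ H) ^ d * (η ^ 2 / dist y z) ^ d := mul_pow _ _ _
      _ ≤ _ := by gcongr; exact le_add_of_nonneg_left (by positivity)

lemma exists_measure_pair_le [IsProbabilityMeasure P] (hB : IsFBM P H d B)
    (hH : H ∈ Ioo 0 1) {a : ℝ} (ha : 0 < a) :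
    ∃ C : ℝ, 0 ≤ C ∧ ∀ s ∈ Icc a 1, ∀ t ∈ Icc a 1, s ≠ t →
      ∀ (y z : EuclideanSpace ℝ (Fin d)) {η : ℝ}, 0 ≤ η →
      P {ω | ∀ i, |B ω s i - y i| ≤ η ∧ |B ω t i - z i| ≤ η} ≤
        ENNReal.ofReal (C * (η ^ 2 / max (|t - s| ^ H) (dist y z)) ^ d) := by
  obtain ⟨K, hK, hnear⟩ := hB.exists_measure_pair_le_mul_exp hH ha
  obtain ⟨C, hC, hfar⟩ := hB.exists_measure_pair_le_of_ne hH ha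
  refine ⟨K ^ d + C, by positivity, fun s hs t ht hst y z η hη ↦ ?_⟩
  have hρ : 0 < |t - s| ^ H := Real.rpow_pos_of_pos (abs_pos.2 (sub_ne_zero.2 hst.symm)) H
  obtain hD | hD := le_or_gt (dist y z) (|t - s| ^ H)
  · refine (hnear s hs t ht hst y z hη).trans (ENNReal.ofReal_le_ofReal ?_)
    rw [max_eq_left hD]
    calc _ ≤ (K * (η ^ 2 / |t - s| ^ H)) ^ d :=
          mul_le_of_le_one_right (by positivity) (Finset.prod_le_one
            (fun _ _ ↦ (Real.exp_pos _).le) fun _ _ ↦ exp_neg_sq_div_le_one _ _)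
      _ = K ^ d * (η ^ 2 / |t - s| ^ H) ^ d := mul_pow _ _ _
      _ ≤ _ := by gcongr; exact le_add_of_nonneg_right hC
  · rw [max_eq_right hD.le]
    refine (hfar s hs t ht hst y z hη (dist_pos.1 (hρ.trans hD))).trans
      (ENNReal.ofReal_le_ofReal ?_)
    gcongr
    exact le_add_of_nonneg_left (by positivity)

lemma exists_measure_tail_dist_le (hB : IsFBM P H d B) (hH : 0 < H) {p : ℝ} (hp : 0 < p) :
    ∃ C : ℝ, 0 ≤ C ∧ ∀ s ∈ Icc (0 : ℝ) 1, ∀ t ∈ Icc (0 : ℝ) 1, ∀ {l : ℝ}, 0 < l →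
      P {ω | l ≤ dist (B ω s) (B ω t)} ≤ ENNReal.ofReal (C * (|t - s| ^ H / l) ^ p) := by
  obtain ⟨C, hC, htail⟩ := exists_gaussianReal_tail_le hp
  refine ⟨d * (C * √d ^ p), by positivity, fun s hs t ht l hl ↦ ?_⟩
  obtain rfl | hd := Nat.eq_zero_or_pos d
  · have hdist ω : dist (B ω s) (B ω t) = 0 := by rw [Subsingleton.elim (B ω s), dist_self]
    simp [hdist, hl.not_ge]
  have : Nonempty (Fin d) := ⟨⟨0, hd⟩⟩
  have hcoord (i : Fin d) : P {ω | l / √d ≤ |B ω s i - B ω t i|} ≤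
      ENNReal.ofReal (C * (|t - s| ^ H / (l / √d)) ^ p) := by
    rw [(hB.hasLaw_coord_sub_coord hH hs ht i).measure_eq (p := fun x ↦ l / √d ≤ |x|)
      (measurableSet_le (by fun_prop) (by fun_prop))]
    refine (htail _ (by positivity)).trans_eq ?_
    rw [Real.coe_toNNReal _ (sq_nonneg _), Real.sqrt_sq (by positivity)]
  calc P {ω | l ≤ dist (B ω s) (B ω t)}
      ≤ P (⋃ i, {ω | l / √d ≤ |B ω s i - B ω t i|}) := by
        refine measure_mono fun ω hω ↦ mem_iUnion.2 ?_
        obtain ⟨i, hi⟩ := exists_dist_le_sqrt_card_mul (B ω s) (B ω t)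
        rw [Fintype.card_fin] at hi
        exact ⟨i, (div_le_iff₀' (by positivity)).2 (le_trans hω hi)⟩
    _ ≤ ∑ _i : Fin d, ENNReal.ofReal (C * (|t - s| ^ H / (l / √d)) ^ p) :=
        (measure_iUnion_fintype_le _ _).trans (Finset.sum_le_sum fun i _ ↦ hcoord i)
    _ = ENNReal.ofReal (d * (C * √d ^ p) * (|t - s| ^ H / l) ^ p) := by
        rw [Finset.sum_const, Finset.card_univ, Fintype.card_fin, nsmul_eq_mul,
          ← ENNReal.ofReal_natCast d, ← ENNReal.ofReal_mul (Nat.cast_nonneg d),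
          div_div_eq_mul_div, mul_comm _ (√d), mul_div_assoc,
          Real.mul_rpow (Real.sqrt_nonneg _) (by positivity)]
        ring_nf

end IsFBM
end FractionalBrownianMotion

section Frostman

variable {X κ : Type*} [MeasurableSpace X]

/-- `ν` is a measure carried by `G` which gives mass at most `w j` to each cell of the partition
into level sets of `q j`, for all `m ≤ j ≤ n`, and whose total mass is at least the content `M G`.
Such measures are built from the finest generation `n` down to `m` in the proof of Frostman's
lemma. -/
structure IsCellFlow (q : ℕ → X → κ) (w : ℕ → ℝ≥0∞) (M : OuterMeasure X) (m n : ℕ) (G : Set X)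
    (ν : Measure X) : Prop where
  measure_univ_ne_top : ν univ ≠ ∞
  measure_compl : ν Gᶜ = 0
  measure_cell_le : ∀ j ∈ Icc m n, ∀ c, ν (q j ⁻¹' {c}) ≤ w j
  content_le : M G ≤ ν univ

namespace IsCellFlow

variable {q : ℕ → X → κ} {w : ℕ → ℝ≥0∞} {M : OuterMeasure X} {m n : ℕ} {G : Set X}

lemma exists_base (hG : MeasurableSet G) (hw : w n ≠ ∞) (hMG : M G ≤ w n) :
    ∃ ν, IsCellFlow q w M n n G ν := by
  rcases G.eq_empty_or_nonempty with rfl | ⟨x, hx⟩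
  · exact ⟨0, by simp, by simp, by simp, by simp⟩
  · refine ⟨w n • Measure.dirac x, by simpa, by simp [Measure.dirac_apply' _ hG.compl, hx], ?_,
      by simpa⟩
    rintro j ⟨hnj, hjn⟩ c
    obtain rfl := hnj.antisymm hjn
    exact (measure_mono (subset_univ _)).trans (by simp)

lemma exists_rescale {ν : Measure X} (hν : IsCellFlow q w M (m + 1) n G ν) (hw : w m ≠ ∞)
    (hMG : M G ≤ w m) : ∃ ν', IsCellFlow q w M m n G ν' := by
  by_cases hle : ν univ ≤ w m
  · refine ⟨ν, hν.measure_univ_ne_top, hν.measure_compl, fun j hj c ↦ ?_, hν.content_le⟩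
    rcases hj.1.eq_or_lt with rfl | hmj
    · exact (measure_mono (subset_univ _)).trans hle
    · exact hν.measure_cell_le j ⟨hmj, hj.2⟩ c
  · have hlt : w m < ν univ := not_le.1 hle
    set θ := w m / ν univ
    have htotal : (θ • ν) univ = w m :=
      ENNReal.div_mul_cancel (bot_le.trans_lt hlt).ne' hν.measure_univ_ne_top
    have hmono (s : Set X) : (θ • ν) s ≤ ν s :=
      mul_le_of_le_one_left' (ENNReal.div_le_of_le_mul (by simpa using hlt.le))
    refine ⟨θ • ν, htotal ▸ hw, le_antisymm ((hmono _).trans hν.measure_compl.le) bot_le,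
      fun j hj c ↦ ?_, htotal ▸ hMG⟩
    rcases hj.1.eq_or_lt with rfl | hmj
    · exact (measure_mono (subset_univ _)).trans htotal.le
    · exact (hmono _).trans (hν.measure_cell_le j ⟨hmj, hj.2⟩ c)

lemma exists_of_forall_inter_cell (hq : ∀ ⦃j k⦄, j ≤ k → ∀ x y, q k x = q k y → q j x = q j y)
    (hfin : (q m '' G).Finite) (h : ∀ c, ∃ ν, IsCellFlow q w M m n (G ∩ q m ⁻¹' {c}) ν) :
    ∃ ν, IsCellFlow q w M m n G ν := by
  choose ν hν using h
  have hzero {j : ℕ} (hj : m ≤ j) {x : X} {c : κ} (hc : c ≠ q m x) :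
      ν c (q j ⁻¹' {q j x}) = 0 :=
    measure_mono_null (fun y (hy : q j y = q j x) (hy' : y ∈ G ∩ q m ⁻¹' {c}) ↦
      hc (hy'.2.symm.trans (hq hj y x hy))) (hν c).measure_compl
  refine ⟨∑ c ∈ hfin.toFinset, ν c, ?_, ?_, fun j hj c' ↦ ?_, ?_⟩
  · simp [Measure.finsetSum_apply, (hν _).measure_univ_ne_top]
  · rw [Measure.finsetSum_apply]
    exact Finset.sum_eq_zero fun c _ ↦
      measure_mono_null (compl_subset_compl.2 inter_subset_left) (hν c).measure_compl
  · rw [Measure.finsetSum_apply]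
    rcases (q j ⁻¹' {c'}).eq_empty_or_nonempty with hempty | ⟨x, rfl⟩
    · simp [hempty]
    · calc ∑ c ∈ hfin.toFinset, ν c (q j ⁻¹' {q j x})
          ≤ ∑ c ∈ {q m x}, ν c (q j ⁻¹' {q j x}) :=
            Finset.sum_le_sum_of_ne_zero fun c _ hc ↦
              Finset.mem_singleton.2 (not_imp_comm.1 (hzero hj.1) hc)
        _ ≤ w j := by simpa using (hν (q m x)).measure_cell_le j hj (q j x)
  · rw [Measure.finsetSum_apply]
    have hcover : G ⊆ ⋃ c ∈ hfin.toFinset, G ∩ q m ⁻¹' {c} := fun x hx ↦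
      mem_iUnion₂.2 ⟨q m x, hfin.mem_toFinset.2 (mem_image_of_mem _ hx), hx, rfl⟩
    calc M G ≤ ∑ c ∈ hfin.toFinset, M (G ∩ q m ⁻¹' {c}) :=
          (measure_mono hcover).trans (measure_biUnion_finset_le _ _)
      _ ≤ ∑ c ∈ hfin.toFinset, ν c univ := Finset.sum_le_sum fun c _ ↦ (hν c).content_le

lemma exists_of_content_cell_le
    (hq : ∀ ⦃j k⦄, j ≤ k → ∀ x y, q k x = q k y → q j x = q j y)
    (hqm : ∀ k c, MeasurableSet (q k ⁻¹' {c})) (hw : ∀ k, w k ≠ ∞)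
    (hM : ∀ k, m ≤ k → ∀ c, M (q k ⁻¹' {c}) ≤ w k) (hmn : m ≤ n) (hG : MeasurableSet G)
    (hfin : ∀ k, (q k '' G).Finite) : ∃ ν, IsCellFlow q w M m n G ν := by
  have hcell {k : ℕ} (hk : m ≤ k) (G : Set X) (c : κ) : M (G ∩ q k ⁻¹' {c}) ≤ w k :=
    (measure_mono inter_subset_right).trans (hM k hk c)
  refine Nat.decreasingInduction' (P := fun k ↦ ∀ G, MeasurableSet G →
    (∀ j, (q j '' G).Finite) → ∃ ν, IsCellFlow q w M k n G ν)
    (fun k _ hk ih G hG hfin ↦ ?_) hmn (fun G hG hfin ↦ ?_) G hG hfin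
  · refine exists_of_forall_inter_cell hq (hfin k) fun c ↦ ?_
    obtain ⟨ν, hν⟩ := ih _ (hG.inter (hqm k c))
      fun j ↦ (hfin j).subset (image_mono inter_subset_left)
    exact hν.exists_rescale (hw k) (hcell hk G c)
  · exact exists_of_forall_inter_cell hq (hfin n) fun c ↦
      exists_base (hG.inter (hqm n c)) (hw n) (hcell hmn G c)

end IsCellFlow

lemma exists_content_ne_zero_of_lt_dimH {Y : Type*} [EMetricSpace Y] {F : Set Y} {γ : NNReal}
    (h : γ < dimH F) : ∃ M : OuterMeasure Y, M F ≠ 0 ∧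
      ∃ r, 0 < r ∧ ∀ G, Metric.ediam G ≤ r → M G ≤ Metric.ediam G ^ (γ : ℝ) := by
  borelize Y
  have hpos : 0 < OuterMeasure.mkMetric (fun r : ℝ≥0∞ ↦ r ^ (γ : ℝ)) F := by
    rw [← Measure.mkMetric_toOuterMeasure]
    exact (zero_lt_top).trans_eq (hausdorffMeasure_of_lt_dimH h).symm
  simp only [OuterMeasure.mkMetric, OuterMeasure.mkMetric', OuterMeasure.iSup_apply,
    lt_iSup_iff] at hpos
  obtain ⟨r, hr, hF⟩ := hpos
  exact ⟨_, hF.ne', r, hr, fun G hG ↦ OuterMeasure.mkMetric'.pre_le hG⟩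

variable {ι : Type*}

/-- The label of the dyadic cube of side `2⁻ᵏ` (half-open, with corners in `2⁻ᵏ ℤ^ι`) which
contains `x`; the dyadic cubes themselves are the level sets of this function. -/
noncomputable def dyadicIndex (k : ℕ) (x : EuclideanSpace ℝ ι) (i : ι) : ℤ := ⌊2 ^ k * x i⌋

lemma dyadicIndex_eq_of_le {j k : ℕ} (hjk : j ≤ k) {x y : EuclideanSpace ℝ ι}
    (h : dyadicIndex k x = dyadicIndex k y) : dyadicIndex j x = dyadicIndex j y := by
  have hfloor (z : EuclideanSpace ℝ ι) (i : ι) :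
      dyadicIndex j z i = dyadicIndex k z i / (2 ^ (k - j) : ℕ) := by
    rw [dyadicIndex, dyadicIndex, ← Int.floor_div_natCast]
    congr 1
    rw [← Nat.add_sub_of_le hjk, pow_add, Nat.add_sub_cancel_left]
    push_cast
    field_simp
  funext i
  rw [hfloor, hfloor, h]

lemma measurableSet_dyadicIndex_preimage [Countable ι] (k : ℕ) (c : ι → ℤ) :
    MeasurableSet (dyadicIndex k ⁻¹' {c} : Set (EuclideanSpace ℝ ι)) := by
  have hmeas : Measurable (dyadicIndex k : EuclideanSpace ℝ ι → ι → ℤ) :=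
    measurable_pi_lambda _ fun i ↦ Int.measurable_floor.comp
      (((measurable_pi_apply i).comp (WithLp.measurable_ofLp 2 _)).const_mul _)
  exact hmeas (measurableSet_singleton c)

lemma finite_image_dyadicIndex [Finite ι] {F : Set (EuclideanSpace ℝ ι)}
    (hF : Bornology.IsBounded F) (k : ℕ) : (dyadicIndex k '' F).Finite := by
  have := Fintype.ofFinite ι
  obtain ⟨R, hR⟩ := hF.exists_norm_le
  refine (Set.Finite.pi' fun _ : ι ↦ finite_Icc ⌊2 ^ k * (-R)⌋ ⌊2 ^ k * R⌋).subset ?_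
  rintro _ ⟨x, hx, rfl⟩ i
  obtain ⟨hlo, hhi⟩ := abs_le.1 ((PiLp.norm_apply_le x i).trans (hR x hx))
  exact ⟨Int.floor_mono (by gcongr), Int.floor_mono (by gcongr)⟩

section Fintype

variable [Fintype ι]

lemma dist_le_of_dyadicIndex_eq {k : ℕ} {x y : EuclideanSpace ℝ ι}
    (h : dyadicIndex k x = dyadicIndex k y) : dist x y ≤ √(Fintype.card ι) * (1 / 2) ^ k := by
  cases isEmpty_or_nonempty ι
  · simp [Subsingleton.elim x y]
  obtain ⟨i, hi⟩ := exists_dist_le_sqrt_card_mul x y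
  have hcoord := Int.abs_sub_lt_one_of_floor_eq_floor (congrFun h i)
  rw [← mul_sub, abs_mul, abs_of_pos (by positivity)] at hcoord
  refine hi.trans (mul_le_mul_of_nonneg_left ?_ (by positivity))
  rw [one_div_pow, le_div_iff₀' (by positivity)]
  exact hcoord.le

lemma ediam_dyadicIndex_preimage_le (k : ℕ) (c : ι → ℤ) :
    Metric.ediam (dyadicIndex k ⁻¹' {c} : Set (EuclideanSpace ℝ ι)) ≤
      ENNReal.ofReal (√(Fintype.card ι) * (1 / 2) ^ k) := by
  refine Metric.ediam_le fun x hx y hy ↦ ?_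
  rw [edist_dist]
  exact ENNReal.ofReal_le_ofReal (dist_le_of_dyadicIndex_eq (hx.trans hy.symm))

lemma measure_closedBall_le_of_forall_dyadicIndex {ν : Measure (EuclideanSpace ℝ ι)} {k : ℕ}
    {u : ℝ≥0∞} (h : ∀ c, ν (dyadicIndex k ⁻¹' {c}) ≤ u) {r : ℝ} (hr : r ≤ (1 / 2) ^ k)
    (x : EuclideanSpace ℝ ι) : ν (Metric.closedBall x r) ≤ 3 ^ Fintype.card ι * u := by
  classical
  set J := Fintype.piFinset fun i ↦
    Finset.Icc (dyadicIndex k x i - 1) (dyadicIndex k x i + 1) with hJ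
  have hcard : J.card = 3 ^ Fintype.card ι := by
    have hthree (z : ℤ) : (z + 1 + 1 - (z - 1)).toNat = 3 := by lia
    simp [hJ, Fintype.card_piFinset, hthree]
  have hcover : Metric.closedBall x r ⊆ ⋃ c ∈ J, dyadicIndex k ⁻¹' {c} := by
    refine fun y hy ↦ mem_iUnion₂.2 ⟨dyadicIndex k y, Fintype.mem_piFinset.2 fun i ↦ ?_, rfl⟩
    have hyx : |y i - x i| ≤ (1 / 2) ^ k :=
      (PiLp.norm_apply_le (y - x) i).trans ((mem_closedBall_iff_norm.1 hy).trans hr)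
    have hscaled : |2 ^ k * y i - 2 ^ k * x i| ≤ 1 := by
      rw [← mul_sub, abs_mul, abs_of_pos (by positivity), ← le_div_iff₀' (by positivity),
        ← one_div_pow]
      exact hyx
    obtain ⟨hlo, hhi⟩ := abs_le.1 hscaled
    rw [Finset.mem_Icc, dyadicIndex, dyadicIndex, ← Int.floor_sub_one, ← Int.floor_add_one]
    exact ⟨Int.floor_mono (by linarith), Int.floor_mono (by linarith)⟩
  calc ν (Metric.closedBall x r) ≤ ∑ c ∈ J, ν (dyadicIndex k ⁻¹' {c}) :=
        (measure_mono hcover).trans (measure_biUnion_finset_le _ _)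
    _ ≤ ∑ _c ∈ J, u := Finset.sum_le_sum fun c _ ↦ h c
    _ = 3 ^ Fintype.card ι * u := by simp [hcard]

lemma exists_probabilityMeasure_dyadicIndex_le {F : Set (EuclideanSpace ℝ ι)} (hF : IsCompact F)
    {γ : NNReal} (h : γ < dimH F) : ∃ (C : ℝ≥0∞) (m : ℕ), C ≠ ∞ ∧ ∀ n,
      ∃ p : ProbabilityMeasure (EuclideanSpace ℝ ι), (p : Measure (EuclideanSpace ℝ ι)) Fᶜ = 0 ∧
        ∀ j ∈ Icc m n, ∀ c, (p : Measure (EuclideanSpace ℝ ι)) (dyadicIndex j ⁻¹' {c}) ≤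
          C * ENNReal.ofReal ((1 / 2) ^ j) ^ (γ : ℝ) := by
  obtain ⟨M, hMF, r, hr, hM⟩ := exists_content_ne_zero_of_lt_dimH h
  set D : ℕ → ℝ≥0∞ := fun k ↦ ENNReal.ofReal (√(Fintype.card ι) * (1 / 2) ^ k)
  have hDlim : Filter.Tendsto D Filter.atTop (nhds 0) := by
    have hlim := (_root_.tendsto_pow_atTop_nhds_zero_of_lt_one (r := (1 / 2 : ℝ)) (by norm_num)
      (by norm_num)).const_mul √(Fintype.card ι)
    simpa [D] using ENNReal.tendsto_ofReal hlim
  obtain ⟨m, hm⟩ := Filter.eventually_atTop.1 (hDlim.eventually (ge_mem_nhds hr))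
  have hcontent (k : ℕ) (hk : m ≤ k) (c : ι → ℤ) : M (dyadicIndex k ⁻¹' {c}) ≤ D k ^ (γ : ℝ) :=
    (hM _ ((ediam_dyadicIndex_preimage_le k c).trans (hm k hk))).trans
      (ENNReal.rpow_le_rpow (ediam_dyadicIndex_preimage_le k c) γ.coe_nonneg)
  refine ⟨(M F)⁻¹ * ENNReal.ofReal √(Fintype.card ι) ^ (γ : ℝ), m, ENNReal.mul_ne_top
    (ENNReal.inv_ne_top.2 hMF) (ENNReal.rpow_ne_top_of_nonneg γ.coe_nonneg ofReal_ne_top),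
    fun n ↦ ?_⟩
  obtain ⟨ν, hν⟩ := IsCellFlow.exists_of_content_cell_le (q := dyadicIndex) (n := max m n)
    (w := fun k ↦ D k ^ (γ : ℝ)) (fun _ _ hjk _ _ ↦ dyadicIndex_eq_of_le hjk)
    measurableSet_dyadicIndex_preimage
    (fun k ↦ ENNReal.rpow_ne_top_of_nonneg γ.coe_nonneg ofReal_ne_top)
    hcontent (le_max_left m n) hF.measurableSet (finite_image_dyadicIndex hF.isBounded)
  have hν0 : ν univ ≠ 0 := fun h0 ↦ hMF (le_antisymm (hν.content_le.trans h0.le) bot_le)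
  refine ⟨⟨(ν univ)⁻¹ • ν, ⟨ENNReal.inv_mul_cancel hν0 hν.measure_univ_ne_top⟩⟩,
    by simp [hν.measure_compl], fun j hj c ↦ ?_⟩
  calc (ν univ)⁻¹ * ν (dyadicIndex j ⁻¹' {c}) ≤ (M F)⁻¹ * D j ^ (γ : ℝ) := by
        gcongr
        · exact hν.content_le
        · exact hν.measure_cell_le j ⟨hj.1, hj.2.trans (le_max_right m n)⟩ c
    _ = _ := by
        simp only [D]
        rw [ENNReal.ofReal_mul (by positivity), ENNReal.mul_rpow_of_nonneg _ _ γ.coe_nonneg,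
          mul_assoc]

lemma exists_limit_probabilityMeasure {Y : Type*} [MetricSpace Y] [MeasurableSpace Y]
    [BorelSpace Y] {F : Set Y} (hF : IsCompact F) {p : ℕ → ProbabilityMeasure Y}
    (hp : ∀ n, (p n : Measure Y) Fᶜ = 0) :
    ∃ q : ProbabilityMeasure Y, (q : Measure Y) Fᶜ = 0 ∧ ∀ U, IsOpen U → ∀ u,
      (∀ᶠ n in Filter.atTop, (p n : Measure Y) U ≤ u) → (q : Measure Y) U ≤ u := by
  have htight : IsTightMeasureSet {((μ : ProbabilityMeasure Y) : Measure Y) | μ ∈ range p} := by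
    refine isTightMeasureSet_iff_exists_isCompact_measure_compl_le.2 fun ε _ ↦ ⟨F, hF, ?_⟩
    rintro _ ⟨_, ⟨n, rfl⟩, rfl⟩
    exact (hp n).le.trans bot_le
  obtain ⟨q, -, hq⟩ := (isCompact_closure_of_isTightMeasureSet htight).ultrafilter_le_nhds
    ((Filter.hyperfilter ℕ).map p) (Filter.le_principal_iff.2
      (Filter.mem_of_superset Filter.range_mem_map subset_closure))
  have hlim {U : Set Y} (hU : IsOpen U) {u : ℝ≥0∞}
      (hu : ∀ᶠ n in Filter.atTop, (p n : Measure Y) U ≤ u) : (q : Measure Y) U ≤ u := by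
    refine (ProbabilityMeasure.le_liminf_measure_open_of_tendsto hq hU).trans ?_
    exact Filter.liminf_le_of_frequently_le'
      (Filter.Eventually.frequently (Nat.hyperfilter_le_atTop hu))
  exact ⟨q, le_antisymm (hlim hF.isClosed.isOpen_compl (.of_forall fun n ↦ (hp n).le)) bot_le,
    fun U hU u ↦ hlim hU⟩

lemma measure_closedBall_le_of_forall_mem_Icc_dyadicIndex {ν : Measure (EuclideanSpace ℝ ι)}
    {m n : ℕ} {C γ : NNReal} (h : ∀ j ∈ Icc m n, ∀ c,
      ν (dyadicIndex j ⁻¹' {c}) ≤ C * ENNReal.ofReal ((1 / 2) ^ j) ^ (γ : ℝ)) {r : ℝ}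
    (hnr : (1 / 2) ^ n ≤ r) (hrm : r ≤ (1 / 2) ^ m) (x : EuclideanSpace ℝ ι) :
    ν (Metric.closedBall x r) ≤
      ENNReal.ofReal (3 ^ Fintype.card ι * C * 2 ^ (γ : ℝ) * r ^ (γ : ℝ)) := by
  have hr : 0 < r := lt_of_lt_of_le (by positivity) hnr
  obtain ⟨j, hjr, hrj⟩ := exists_nat_pow_near_of_lt_one hr
    (hrm.trans (pow_le_one₀ (by norm_num) (by norm_num))) one_half_pos one_half_lt_one
  have hpow {k l : ℕ} (hkl : (1 / 2 : ℝ) ^ k < (1 / 2) ^ l) : l < k :=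
    (pow_lt_pow_iff_right_of_lt_one₀ one_half_pos one_half_lt_one).1 hkl
  have hj : j ∈ Icc m n := by
    refine ⟨Nat.lt_succ_iff.1 (hpow (hjr.trans_le hrm)), ?_⟩
    by_contra! hnj
    exact absurd (hnr.trans hrj) (not_le.2 (pow_lt_pow_right_of_lt_one₀ one_half_pos
      one_half_lt_one hnj))
  calc ν (Metric.closedBall x r)
      ≤ 3 ^ Fintype.card ι * (C * ENNReal.ofReal ((1 / 2) ^ j) ^ (γ : ℝ)) :=
        measure_closedBall_le_of_forall_dyadicIndex (h j hj) hrj x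
    _ ≤ 3 ^ Fintype.card ι * (C * ENNReal.ofReal (2 * r) ^ (γ : ℝ)) := by
        rw [pow_succ] at hjr
        gcongr
        linarith
    _ = ENNReal.ofReal (3 ^ Fintype.card ι * C * 2 ^ (γ : ℝ) * r ^ (γ : ℝ)) := by
        rw [ENNReal.ofReal_rpow_of_nonneg (by positivity) γ.coe_nonneg,
          Real.mul_rpow two_pos.le hr.le, ← ENNReal.ofReal_coe_nnreal,
          ← ENNReal.ofReal_mul (by positivity), ← ENNReal.ofReal_ofNat 3,
          ← ENNReal.ofReal_pow (by norm_num), ← ENNReal.ofReal_mul (by positivity)]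
        ring_nf

lemma exists_probabilityMeasure_ball_le {F : Set (EuclideanSpace ℝ ι)} (hF : IsCompact F) {γ : ℝ}
    (hγ : 0 ≤ γ) (h : ENNReal.ofReal γ < dimH F) : ∃ C : ℝ, 0 ≤ C ∧
      ∃ p : ProbabilityMeasure (EuclideanSpace ℝ ι), (p : Measure (EuclideanSpace ℝ ι)) Fᶜ = 0 ∧
        ∀ x r, 0 < r → (p : Measure (EuclideanSpace ℝ ι)) (Metric.ball x r) ≤
          ENNReal.ofReal (C * r ^ γ) := by
  lift γ to NNReal using hγ
  obtain ⟨C, m, hC, hCm⟩ := exists_probabilityMeasure_dyadicIndex_le hF (by simpa using h)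
  lift C to NNReal using hC
  choose p hpF hp using hCm
  obtain ⟨q, hqF, hq⟩ := exists_limit_probabilityMeasure hF hpF
  refine ⟨3 ^ Fintype.card ι * C * 2 ^ (γ : ℝ) + (2 ^ m) ^ (γ : ℝ), by positivity, q, hqF,
    fun x r hr ↦ ?_⟩
  rw [add_mul]
  rcases le_or_gt r ((1 / 2) ^ m) with hrm | hrm
  · have hsmall : ∀ᶠ n in Filter.atTop, (1 / 2 : ℝ) ^ n ≤ r :=
      (_root_.tendsto_pow_atTop_nhds_zero_of_lt_one one_half_pos.le one_half_lt_one).eventually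
        (ge_mem_nhds hr)
    refine hq _ Metric.isOpen_ball _ (hsmall.mono fun n hn ↦ ?_)
    refine (measure_mono Metric.ball_subset_closedBall).trans
      ((measure_closedBall_le_of_forall_mem_Icc_dyadicIndex (hp n) hn hrm x).trans
        (ENNReal.ofReal_le_ofReal (le_add_of_nonneg_right (by positivity))))
  · have hone : 1 ≤ 2 ^ m * r := by
      rw [one_div_pow, div_lt_iff₀' (by positivity)] at hrm
      exact hrm.le
    refine prob_le_one.trans (ENNReal.one_le_ofReal.2 ?_)
    calc 1 ≤ (2 ^ m * r) ^ (γ : ℝ) := Real.one_le_rpow hone γ.coe_nonneg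
      _ = (2 ^ m) ^ (γ : ℝ) * r ^ (γ : ℝ) := Real.mul_rpow (by positivity) hr.le
      _ ≤ _ := le_add_of_nonneg_left (by positivity)

end Fintype

lemma ofReal_max_rpow_neg_le_tsum_indicator {Y : Type*} [PseudoMetricSpace Y] {p R : ℝ}
    (hp : 0 ≤ p) (hR : 0 < R) (x y : Y) :
    ENNReal.ofReal (max R (dist x y) ^ (-p)) ≤ ∑' k : ℕ, (Metric.ball x (2 ^ k * R)).indicator
      (fun _ ↦ ENNReal.ofReal ((2 ^ k * R / 2) ^ (-p))) y := by
  classical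
  have hex : ∃ k : ℕ, dist x y < 2 ^ k * R := by
    obtain ⟨k, hk⟩ := pow_unbounded_of_one_lt (dist x y / R) one_lt_two
    exact ⟨k, (div_lt_iff₀ hR).1 hk⟩
  have hhalf : 2 ^ Nat.find hex * R / 2 ≤ max R (dist x y) := by
    rcases hfind : Nat.find hex with _ | k
    · linarith [le_max_left R (dist x y)]
    · have hk : ¬ dist x y < 2 ^ k * R := Nat.find_min hex (by lia)
      rw [pow_succ]
      linarith [le_max_right R (dist x y)]
  refine le_trans ?_ (ENNReal.le_tsum (Nat.find hex))
  rw [indicator_of_mem (Metric.mem_ball'.2 (Nat.find_spec hex))]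
  exact ENNReal.ofReal_le_ofReal
    (Real.rpow_le_rpow_of_nonpos (by positivity) hhalf (neg_nonpos.2 hp))

lemma exists_lintegral_max_rpow_neg_le {Y : Type*} [PseudoMetricSpace Y] [MeasurableSpace Y]
    [OpensMeasurableSpace Y] {ν : Measure Y} {C γ p : ℝ} (hC : 0 ≤ C) (hp : 0 ≤ p) (hγp : γ < p)
    (hν : ∀ x r, 0 < r → ν (Metric.ball x r) ≤ ENNReal.ofReal (C * r ^ γ)) :
    ∃ C' : ℝ, 0 ≤ C' ∧ ∀ x R, 0 < R →
      ∫⁻ y, ENNReal.ofReal (max R (dist x y) ^ (-p)) ∂ν ≤ ENNReal.ofReal (C' * R ^ (γ - p)) := by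
  set δ : ℝ := 2 ^ (γ - p)
  have hδ0 : 0 ≤ δ := by positivity
  have hδ1 : δ < 1 := Real.rpow_lt_one_of_one_lt_of_neg one_lt_two (by linarith)
  refine ⟨2 ^ p * C * (1 - δ)⁻¹, mul_nonneg (by positivity) (inv_nonneg.2 (by linarith)),
    fun x R hR ↦ ?_⟩
  have hshell (k : ℕ) : ENNReal.ofReal ((2 ^ k * R / 2) ^ (-p)) * ν (Metric.ball x (2 ^ k * R)) ≤
      ENNReal.ofReal (2 ^ p * C * R ^ (γ - p) * δ ^ k) := by
    refine (mul_le_mul_right (hν x _ (by positivity)) _).trans_eq ?_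
    rw [← ENNReal.ofReal_mul (by positivity)]
    congr 1
    calc (2 ^ k * R / 2) ^ (-p) * (C * (2 ^ k * R) ^ γ)
        = 2 ^ p * C * ((2 ^ k * R) ^ (-p) * (2 ^ k * R) ^ γ) := by
          rw [Real.div_rpow (by positivity) two_pos.le, Real.rpow_neg two_pos.le, div_inv_eq_mul]
          ring
      _ = 2 ^ p * C * (R ^ (γ - p) * δ ^ k) := by
          rw [← Real.rpow_add (by positivity), Real.mul_rpow (by positivity) hR.le,
            ← Real.rpow_natCast, ← Real.rpow_natCast, ← Real.rpow_mul two_pos.le,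
            ← Real.rpow_mul two_pos.le, neg_add_eq_sub, mul_comm (k : ℝ), mul_comm (R ^ _)]
      _ = _ := by ring
  calc ∫⁻ y, ENNReal.ofReal (max R (dist x y) ^ (-p)) ∂ν
      ≤ ∫⁻ y, ∑' k : ℕ, (Metric.ball x (2 ^ k * R)).indicator
          (fun _ ↦ ENNReal.ofReal ((2 ^ k * R / 2) ^ (-p))) y ∂ν :=
        lintegral_mono fun y ↦ ofReal_max_rpow_neg_le_tsum_indicator hp hR x y
    _ = ∑' k : ℕ, ENNReal.ofReal ((2 ^ k * R / 2) ^ (-p)) * ν (Metric.ball x (2 ^ k * R)) := by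
        rw [lintegral_tsum fun k ↦ (measurable_const.indicator measurableSet_ball).aemeasurable]
        simp only [lintegral_indicator_const measurableSet_ball]
    _ ≤ ∑' k : ℕ, ENNReal.ofReal (2 ^ p * C * R ^ (γ - p) * δ ^ k) := ENNReal.tsum_le_tsum hshell
    _ = ENNReal.ofReal (2 ^ p * C * (1 - δ)⁻¹ * R ^ (γ - p)) := by
        rw [← ENNReal.ofReal_tsum_of_nonneg (fun k ↦ by positivity)
          ((summable_geometric_of_lt_one hδ0 hδ1).mul_left _), tsum_mul_left,
          tsum_geometric_of_lt_one hδ0 hδ1]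
        ring_nf

end Frostman

section ModulusOfContinuity

variable {Y : Type*} [PseudoMetricSpace Y]

lemma dist_le_of_forall_dist_succ_le {g : ℕ → Y} {m : ℕ} {u : ℝ} (hu : 0 ≤ u)
    (h : ∀ k < m, dist (g k) (g (k + 1)) ≤ u) {j k : ℕ} (hj : j ≤ m) (hk : k ≤ m)
    (hjk : j ≤ k + 1) (hkj : k ≤ j + 1) : dist (g j) (g k) ≤ u := by
  obtain rfl | rfl | rfl : j = k ∨ j = k + 1 ∨ k = j + 1 := by lia
  · simpa
  · rw [dist_comm]
    exact h k (by lia)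
  · exact h j (by lia)

/-- The largest multiple of `2⁻ⁿ` not exceeding `t`, for `0 ≤ t`. -/
noncomputable def dyadicFloor (n : ℕ) (t : ℝ) : ℝ := ⌊t * 2 ^ n⌋₊ / 2 ^ n

lemma tendsto_dyadicFloor {t : ℝ} (ht : 0 ≤ t) :
    Filter.Tendsto (dyadicFloor · t) Filter.atTop (nhds t) :=
  (tendsto_nat_floor_mul_div_atTop ht).comp (tendsto_pow_atTop_atTop_of_one_lt one_lt_two)

lemma natFloor_mul_two_pow_le {t : ℝ} (ht : t ≤ 1) (n : ℕ) : ⌊t * 2 ^ n⌋₊ ≤ 2 ^ n := by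
  refine Nat.floor_le_of_le ?_
  push_cast
  exact mul_le_of_le_one_left (by positivity) ht

lemma dyadicFloor_mem_Icc {t : ℝ} (ht : t ≤ 1) (n : ℕ) : dyadicFloor n t ∈ Icc 0 1 :=
  ⟨by unfold dyadicFloor; positivity,
    div_le_one_of_le₀ (mod_cast natFloor_mul_two_pow_le ht n) (by positivity)⟩

section Chaining

variable {g : ℝ → Y} {q : ℝ} {N : ℕ}

lemma dist_dyadicFloor_succ_le (hq : 0 ≤ q) {n : ℕ}
    (h : ∀ k : ℕ, k < 2 ^ (n + 1) → dist (g (k / 2 ^ (n + 1))) (g ((k + 1 : ℕ) / 2 ^ (n + 1))) ≤ q)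
    {t : ℝ} (ht : t ∈ Icc 0 1) : dist (g (dyadicFloor n t)) (g (dyadicFloor (n + 1) t)) ≤ q := by
  have hhalf : ⌊t * 2 ^ n⌋₊ = ⌊t * 2 ^ (n + 1)⌋₊ / 2 := by
    rw [← Nat.floor_div_ofNat, pow_succ]
    congr 1
    ring
  have hcoarse : dyadicFloor n t = (2 * ⌊t * 2 ^ n⌋₊ : ℕ) / 2 ^ (n + 1) := by
    rw [dyadicFloor, pow_succ]
    push_cast
    field_simp
  have hle := natFloor_mul_two_pow_le ht.2 (n + 1)
  rw [hcoarse, dyadicFloor]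
  exact dist_le_of_forall_dist_succ_le (g := fun k : ℕ ↦ g (k / 2 ^ (n + 1))) hq h (by lia) hle
    (by lia) (by lia)

lemma dist_dyadicFloor_le (hq : 0 ≤ q)
    (h : ∀ k : ℕ, k < 2 ^ N → dist (g (k / 2 ^ N)) (g ((k + 1 : ℕ) / 2 ^ N)) ≤ q) {s t : ℝ}
    (hs : s ∈ Icc 0 1) (ht : t ∈ Icc 0 1) (hst : |s - t| ≤ (1 / 2) ^ N) :
    dist (g (dyadicFloor N s)) (g (dyadicFloor N t)) ≤ q := by
  have hfloor {x y : ℝ} (hy : 0 ≤ y) (hxy : |x - y| ≤ (1 / 2) ^ N) :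
      ⌊x * 2 ^ N⌋₊ ≤ ⌊y * 2 ^ N⌋₊ + 1 := by
    rw [← Nat.floor_add_one (by positivity)]
    refine Nat.floor_mono ?_
    have := (le_abs_self _).trans hxy
    rw [one_div_pow, le_div_iff₀ (by positivity)] at this
    linarith
  exact dist_le_of_forall_dist_succ_le (g := fun k : ℕ ↦ g (k / 2 ^ N)) hq h
    (natFloor_mul_two_pow_le hs.2 N) (natFloor_mul_two_pow_le ht.2 N) (hfloor ht.1 hst)
    (hfloor hs.1 (abs_sub_comm s t ▸ hst))

lemma dist_le_of_forall_dist_dyadic_le (hg : ContinuousOn g (Icc 0 1)) (hq0 : 0 ≤ q) (hq1 : q < 1)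
    (h : ∀ n, N ≤ n → ∀ k : ℕ, k < 2 ^ n → dist (g (k / 2 ^ n)) (g ((k + 1 : ℕ) / 2 ^ n)) ≤ q ^ n)
    {s t : ℝ} (hs : s ∈ Icc 0 1) (ht : t ∈ Icc 0 1) (hst : |s - t| ≤ (1 / 2) ^ N) :
    dist (g s) (g t) ≤ 2 * (1 - q)⁻¹ * q ^ N := by
  have hlimit {t : ℝ} (ht : t ∈ Icc 0 1) :
      dist (g (dyadicFloor N t)) (g t) ≤ q ^ (N + 1) * (1 - q)⁻¹ := by
    have hlim : Filter.Tendsto (fun n ↦ g (dyadicFloor (n + N) t)) Filter.atTop (nhds (g t)) :=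
      (hg t ht).tendsto.comp (tendsto_nhdsWithin_iff.2
        ⟨(tendsto_dyadicFloor ht.1).comp (Filter.tendsto_add_atTop_nat N),
          .of_forall fun _ ↦ dyadicFloor_mem_Icc ht.2 _⟩)
    have hsum : HasSum (fun n ↦ q ^ (N + 1) * q ^ n) (q ^ (N + 1) * (1 - q)⁻¹) :=
      (hasSum_geometric_of_lt_one hq0 hq1).mul_left _
    have hbound := dist_le_tsum_of_dist_le_of_tendsto₀ _ (fun n ↦ ?_) hsum.summable hlim
    · simpa [hsum.tsum_eq] using hbound
    · rw [← pow_add, show N + 1 + n = n + N + 1 by lia, show n.succ + N = n + N + 1 by lia]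
      exact dist_dyadicFloor_succ_le (by positivity) (h (n + N + 1) (by lia)) ht
  have hne : 1 - q ≠ 0 := by linarith
  calc dist (g s) (g t)
      ≤ dist (g s) (g (dyadicFloor N s)) + dist (g (dyadicFloor N s)) (g (dyadicFloor N t)) +
          dist (g (dyadicFloor N t)) (g t) := dist_triangle4 _ _ _ _
    _ ≤ q ^ (N + 1) * (1 - q)⁻¹ + q ^ N + q ^ (N + 1) * (1 - q)⁻¹ := by
        gcongr
        · exact dist_comm (g s) _ ▸ hlimit hs
        · exact dist_dyadicFloor_le (by positivity) (h N le_rfl) hs ht hst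
        · exact hlimit ht
    _ = (1 + q) * (1 - q)⁻¹ * q ^ N := by field_simp; ring
    _ ≤ 2 * (1 - q)⁻¹ * q ^ N := by
        have := inv_nonneg.2 (sub_nonneg.2 hq1.le)
        gcongr
        linarith

end Chaining

variable {Ω : Type*} [MeasurableSpace Ω] {P : Measure Ω} {X : Ω → ℝ → Y} {H θ p C : ℝ}

lemma measure_exists_dyadic_increment_gt_le (htail : ∀ s ∈ Icc (0 : ℝ) 1, ∀ t ∈ Icc (0 : ℝ) 1,
      ∀ {l : ℝ}, 0 < l → P {ω | l ≤ dist (X ω s) (X ω t)} ≤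
        ENNReal.ofReal (C * (|t - s| ^ H / l) ^ p)) (n : ℕ) :
    P {ω | ∃ k : ℕ, k < 2 ^ n ∧
        (2 ^ (-θ)) ^ n < dist (X ω (k / 2 ^ n)) (X ω ((k + 1 : ℕ) / 2 ^ n))} ≤
      ENNReal.ofReal (C * (2 ^ (1 - (H - θ) * p)) ^ n) := by
  have hincr (k : ℕ) (hk : k < 2 ^ n) :
      P {ω | (2 ^ (-θ)) ^ n < dist (X ω (k / 2 ^ n)) (X ω ((k + 1 : ℕ) / 2 ^ n))} ≤
        ENNReal.ofReal (C * (2 ^ (-((H - θ) * p))) ^ n) := by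
    have hmem {j : ℕ} (hj : j ≤ 2 ^ n) : (j / 2 ^ n : ℝ) ∈ Icc 0 1 :=
      ⟨by positivity, div_le_one_of_le₀ (mod_cast hj) (by positivity)⟩
    refine le_trans (measure_mono (ofPred_subset_ofPred.2 fun ω hω ↦ hω.le))
      ((htail _ (hmem hk.le) _ (hmem hk) (l := (2 ^ (-θ)) ^ n) (by positivity)).trans_eq ?_)
    congr 2
    rw [← sub_div, Nat.cast_succ, add_sub_cancel_left,
      abs_of_pos (show (0 : ℝ) < 1 / 2 ^ n by positivity), one_div,
      ← Real.rpow_natCast, ← Real.rpow_natCast, ← Real.rpow_natCast, ← Real.rpow_neg two_pos.le,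
      ← Real.rpow_mul two_pos.le, ← Real.rpow_mul two_pos.le, ← Real.rpow_mul two_pos.le,
      ← Real.rpow_sub two_pos, ← Real.rpow_mul two_pos.le]
    ring_nf
  calc P {ω | ∃ k : ℕ, k < 2 ^ n ∧
        (2 ^ (-θ)) ^ n < dist (X ω (k / 2 ^ n)) (X ω ((k + 1 : ℕ) / 2 ^ n))}
      ≤ P (⋃ k ∈ Finset.range (2 ^ n),
          {ω | (2 ^ (-θ)) ^ n < dist (X ω (k / 2 ^ n)) (X ω ((k + 1 : ℕ) / 2 ^ n))}) :=
        measure_mono fun ω ⟨k, hk, hω⟩ ↦ mem_iUnion₂.2 ⟨k, Finset.mem_range.2 hk, hω⟩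
    _ ≤ ∑ _k ∈ Finset.range (2 ^ n), ENNReal.ofReal (C * (2 ^ (-((H - θ) * p))) ^ n) :=
        (measure_biUnion_finset_le _ _).trans
          (Finset.sum_le_sum fun k hk ↦ hincr k (Finset.mem_range.1 hk))
    _ = ENNReal.ofReal (C * (2 ^ (1 - (H - θ) * p)) ^ n) := by
        rw [Finset.sum_const, Finset.card_range, ← ENNReal.ofReal_nsmul, nsmul_eq_mul,
          sub_eq_add_neg (1 : ℝ), Real.rpow_add two_pos, Real.rpow_one, mul_pow]
        push_cast
        ring_nf

lemma measure_modulus_two_pow_gt_le (hX : ∀ ω, ContinuousOn (X ω) (Icc 0 1)) (hθ : 0 < θ)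
    (hp : 1 < (H - θ) * p) (hC : 0 ≤ C)
    (htail : ∀ s ∈ Icc (0 : ℝ) 1, ∀ t ∈ Icc (0 : ℝ) 1, ∀ {l : ℝ}, 0 < l →
      P {ω | l ≤ dist (X ω s) (X ω t)} ≤ ENNReal.ofReal (C * (|t - s| ^ H / l) ^ p)) (N : ℕ) :
    P {ω | ∃ s ∈ Icc (0 : ℝ) 1, ∃ t ∈ Icc (0 : ℝ) 1, |s - t| ≤ (1 / 2) ^ N ∧
        2 * (1 - 2 ^ (-θ))⁻¹ * (2 ^ (-θ)) ^ N < dist (X ω s) (X ω t)} ≤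
      ENNReal.ofReal (C * (1 - 2 ^ (1 - (H - θ) * p))⁻¹ * (2 ^ (1 - (H - θ) * p)) ^ N) := by
  set ρ : ℝ := 2 ^ (1 - (H - θ) * p)
  have hρ0 : 0 ≤ ρ := by positivity
  have hρ1 : ρ < 1 := Real.rpow_lt_one_of_one_lt_of_neg one_lt_two (by linarith)
  have hθ1 : (2 : ℝ) ^ (-θ) < 1 := Real.rpow_lt_one_of_one_lt_of_neg one_lt_two (by linarith)
  calc _ ≤ P (⋃ n, {ω | ∃ k : ℕ, k < 2 ^ (N + n) ∧ (2 ^ (-θ)) ^ (N + n) <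
          dist (X ω (k / 2 ^ (N + n))) (X ω ((k + 1 : ℕ) / 2 ^ (N + n)))}) := by
        refine measure_mono fun ω ⟨s, hs, t, ht, hst, hlt⟩ ↦ ?_
        by_contra hω
        simp only [mem_iUnion, mem_ofPred_eq, not_exists, not_and, not_lt] at hω
        refine hlt.not_ge (dist_le_of_forall_dist_dyadic_le (hX ω) (by positivity) hθ1
          (fun n hn k hk ↦ ?_) hs ht hst)
        obtain ⟨m, rfl⟩ := Nat.exists_eq_add_of_le hn
        exact hω m k hk
    _ ≤ ∑' n, ENNReal.ofReal (C * ρ ^ (N + n)) := (measure_iUnion_le _).trans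
        (ENNReal.tsum_le_tsum fun n ↦ measure_exists_dyadic_increment_gt_le htail (N + n))
    _ = ENNReal.ofReal (C * (1 - ρ)⁻¹ * ρ ^ N) := by
        simp only [pow_add, ← mul_assoc]
        rw [← ENNReal.ofReal_tsum_of_nonneg (fun n ↦ by positivity)
          ((summable_geometric_of_lt_one hρ0 hρ1).mul_left _), tsum_mul_left,
          tsum_geometric_of_lt_one hρ0 hρ1]
        ring_nf

lemma exists_measure_modulus_gt_le (hX : ∀ ω, ContinuousOn (X ω) (Icc 0 1)) (hθ : 0 < θ)
    (hp : 1 < (H - θ) * p) (hC : 0 ≤ C)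
    (htail : ∀ s ∈ Icc (0 : ℝ) 1, ∀ t ∈ Icc (0 : ℝ) 1, ∀ {l : ℝ}, 0 < l →
      P {ω | l ≤ dist (X ω s) (X ω t)} ≤ ENNReal.ofReal (C * (|t - s| ^ H / l) ^ p)) :
    ∃ A K : ℝ, 0 ≤ A ∧ 0 ≤ K ∧ ∀ h ∈ Ioc (0 : ℝ) 1,
      P {ω | ∃ s ∈ Icc (0 : ℝ) 1, ∃ t ∈ Icc (0 : ℝ) 1,
        |s - t| ≤ h ∧ A * h ^ θ < dist (X ω s) (X ω t)} ≤
        ENNReal.ofReal (K * h ^ ((H - θ) * p - 1)) := by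
  have hpow_lt_one {x : ℝ} (hx : 0 < x) : (2 : ℝ) ^ (-x) < 1 :=
    Real.rpow_lt_one_of_one_lt_of_neg one_lt_two (neg_lt_zero.2 hx)
  have hconst {x : ℝ} (hx : 0 < x) : 0 ≤ (1 - (2 : ℝ) ^ (-x))⁻¹ :=
    inv_nonneg.2 (sub_nonneg.2 (hpow_lt_one hx).le)
  have hr : 0 < (H - θ) * p - 1 := by linarith
  set r := (H - θ) * p - 1 with hr_def
  refine ⟨2 * (1 - 2 ^ (-θ))⁻¹ * 2 ^ θ, C * (1 - 2 ^ (-r))⁻¹ * 2 ^ r, ?_, ?_, fun h hh ↦ ?_⟩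
  · exact mul_nonneg (mul_nonneg two_pos.le (hconst hθ)) (by positivity)
  · exact mul_nonneg (mul_nonneg hC (hconst hr)) (by positivity)
  obtain ⟨N, hNh, hhN⟩ := exists_nat_pow_near_of_lt_one hh.1 hh.2 one_half_pos one_half_lt_one
  have hscale {x : ℝ} (hx : 0 < x) : ((2 : ℝ) ^ (-x)) ^ N ≤ 2 ^ x * h ^ x := by
    rw [← Real.mul_rpow two_pos.le hh.1.le, ← Real.rpow_natCast, ← Real.rpow_mul two_pos.le,
      neg_mul_comm, mul_comm, Real.rpow_mul two_pos.le, Real.rpow_neg two_pos.le,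
      Real.rpow_natCast, ← inv_pow, ← one_div]
    rw [pow_succ] at hNh
    exact Real.rpow_le_rpow (by positivity) (by linarith) hx.le
  refine (measure_mono ?_).trans
    ((measure_modulus_two_pow_gt_le hX hθ hp hC htail N).trans (ENNReal.ofReal_le_ofReal ?_))
  · rintro ω ⟨s, hs, t, ht, hst, hlt⟩
    refine ⟨s, hs, t, ht, hst.trans hhN, lt_of_le_of_lt ?_ hlt⟩
    rw [mul_assoc _ (2 ^ θ)]
    exact mul_le_mul_of_nonneg_left (hscale hθ) (mul_nonneg two_pos.le (hconst hθ))
  · rw [← neg_sub ((H - θ) * p), ← hr_def, mul_assoc _ (2 ^ r)]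
    exact mul_le_mul_of_nonneg_left (hscale hr) (mul_nonneg hC (hconst hr))

end ModulusOfContinuity

section MinkowskiCovering

variable {Y : Type*} [PseudoMetricSpace Y] {F : Set Y} {g : ℝ}

lemma covN_lt_top (hF : TotallyBounded F) {r : ℝ} (hr : 0 < r) :
    covN (fun x y : Y => dist x y) F r < ∞ := by
  obtain ⟨s, hs, hFs⟩ := Metric.totallyBounded_iff.1 hF r hr
  lift s to Finset Y using hs
  exact lt_of_le_of_lt (iInf₂_le s hFs) (natCast_lt_top _)

lemma isBoundedUnder_log_covN (h0 : 0 < upMinkDim (fun x y : Y => dist x y) F) :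
    Filter.IsBoundedUnder (· ≤ ·) (nhdsWithin 0 (Ioi 0)) fun r : ℝ ↦
      Real.log (covN (fun x y : Y => dist x y) F r).toReal / Real.log (1 / r) := by
  -- The real `limsup` of an unbounded function is the junk value `0`.
  by_contra hb
  refine h0.ne' ?_
  rw [upMinkDim, Filter.limsup_eq]
  exact (congrArg sInf (eq_empty_of_forall_notMem fun x hx ↦
    hb ⟨x, Filter.eventually_map.2 hx⟩)).trans Real.sInf_empty

lemma eventually_exists_cover_card_le_rpow_neg (hF : TotallyBounded F)
    (h0 : 0 < upMinkDim (fun x y : Y => dist x y) F)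
    (hg : upMinkDim (fun x y : Y => dist x y) F < g) :
    ∀ᶠ r in nhdsWithin (0 : ℝ) (Ioi 0), ∃ s : Finset Y,
      F ⊆ ⋃ x ∈ s, Metric.ball x r ∧ (s.card : ℝ) ≤ r ^ (-g) := by
  filter_upwards [Filter.eventually_lt_of_limsup_lt hg (isBoundedUnder_log_covN h0),
    Ioo_mem_nhdsGT one_pos] with r hlog ⟨hr0, hr1⟩
  set N := covN (fun x y : Y => dist x y) F r with hN
  have hNr : N.toReal < r ^ (-g) := by
    rcases toReal_nonneg (a := N).eq_or_lt with hN0 | hN0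
    · exact hN0 ▸ Real.rpow_pos_of_pos hr0 _
    · rw [one_div, Real.log_inv, div_lt_iff₀ (neg_pos.2 (Real.log_neg hr0 hr1))] at hlog
      rw [← Real.log_lt_log_iff hN0 (Real.rpow_pos_of_pos hr0 _), Real.log_rpow hr0]
      linarith
  have hlt : N < ENNReal.ofReal (r ^ (-g)) :=
    (lt_ofReal_iff_toReal_lt (covN_lt_top hF hr0).ne).2 hNr
  simp only [hN, covN, iInf_lt_iff] at hlt
  obtain ⟨s, hFs, hs⟩ := hlt
  refine ⟨s, hFs, ?_⟩
  simpa using ((lt_ofReal_iff_toReal_lt (natCast_ne_top _)).1 hs).le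

end MinkowskiCovering

section HittingUpperBound

variable {Ω T Y : Type*} [MeasurableSpace Ω]
  {P : Measure Ω} {W : Ω → T → Y} {F : Set Y} {E S : Set T} {C β δ : ℝ}

lemma measure_exists_mem_le_add [PseudoMetricSpace Y] {s : Finset Y} {η : ℝ} {q : ℝ≥0∞} {t₀ : T}
    (hs : F ⊆ ⋃ x ∈ s, Metric.ball x η)
    (hq : ∀ x ∈ s, P {ω | dist (W ω t₀) x ≤ 2 * η} ≤ q) :
    P {ω | ∃ t ∈ E, W ω t ∈ F} ≤
      P {ω | ∃ t ∈ E, η < dist (W ω t₀) (W ω t)} + s.card * q := by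
  have hsub : {ω | ∃ t ∈ E, W ω t ∈ F} ⊆ {ω | ∃ t ∈ E, η < dist (W ω t₀) (W ω t)} ∪
      ⋃ x ∈ s, {ω | dist (W ω t₀) x ≤ 2 * η} := by
    rintro ω ⟨t, ht, htF⟩
    by_cases hfar : η < dist (W ω t₀) (W ω t)
    · exact .inl ⟨t, ht, hfar⟩
    obtain ⟨x, hx, hxt⟩ := mem_iUnion₂.1 (hs htF)
    refine .inr (mem_iUnion₂.2 ⟨x, hx, ?_⟩)
    have := dist_triangle (W ω t₀) (W ω t) x
    rw [Metric.mem_ball] at hxt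
    rw [mem_ofPred_eq]
    linarith
  calc P {ω | ∃ t ∈ E, W ω t ∈ F}
      ≤ P {ω | ∃ t ∈ E, η < dist (W ω t₀) (W ω t)} +
          ∑ x ∈ s, P {ω | dist (W ω t₀) x ≤ 2 * η} := (measure_mono hsub).trans
        ((measure_union_le _ _).trans (add_le_add_right (measure_biUnion_finset_le _ _) _))
    _ ≤ P {ω | ∃ t ∈ E, η < dist (W ω t₀) (W ω t)} + s.card * q := by
        grw [Finset.sum_le_card_nsmul _ _ _ hq, nsmul_eq_mul]

lemma exists_measure_exists_mem_near_le [PseudoMetricSpace T] [PseudoMetricSpace Y]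
    {A K θ g d : ℝ} (hA : 0 ≤ A) (hK : 0 ≤ K) (hC : 0 ≤ C) (hθ : 0 < θ)
    (hcov : ∀ᶠ r in nhdsWithin (0 : ℝ) (Ioi 0), ∃ s : Finset Y,
      F ⊆ ⋃ x ∈ s, Metric.ball x r ∧ (s.card : ℝ) ≤ r ^ (-g))
    (hball : ∀ t ∈ S, ∀ x, ∀ η, 0 ≤ η → P {ω | dist (W ω t) x ≤ η} ≤ ENNReal.ofReal (C * η ^ d))
    (hmod : ∀ h ∈ Ioc (0 : ℝ) 1,
      P {ω | ∃ s ∈ S, ∃ t ∈ S, dist s t ≤ h ∧ A * h ^ θ < dist (W ω s) (W ω t)} ≤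
        ENNReal.ofReal (K * h ^ (θ * (d - g)))) :
    ∃ C', 0 ≤ C' ∧ ∀ᶠ h in nhdsWithin (0 : ℝ) (Ioi 0), ∀ t₀ ∈ S,
      P {ω | ∃ t ∈ {t ∈ S | dist t₀ t ≤ h}, W ω t ∈ F} ≤
        ENNReal.ofReal (C' * h ^ (θ * (d - g))) := by
  have hscale : Filter.Tendsto (fun h : ℝ ↦ (A + 1) * h ^ θ) (nhdsWithin 0 (Ioi 0))
      (nhdsWithin 0 (Ioi 0)) := by
    refine tendsto_nhdsWithin_iff.2 ⟨?_, ?_⟩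
    · have := (Real.continuousAt_rpow_const 0 θ (.inr hθ.le)).tendsto.const_mul (A + 1)
      rw [Real.zero_rpow hθ.ne', mul_zero] at this
      exact this.mono_left nhdsWithin_le_nhds
    · filter_upwards [self_mem_nhdsWithin] with h (hh : 0 < h)
      exact mem_Ioi.2 (by positivity)
  refine ⟨K + C * 2 ^ d * (A + 1) ^ (d - g), by positivity, ?_⟩
  filter_upwards [hscale.eventually hcov, Ioc_mem_nhdsGT one_pos] with h ⟨s, hFs, hs⟩ hh t₀ ht₀
  have hh0 := hh.1
  calc _ ≤ P {ω | ∃ t ∈ {t ∈ S | dist t₀ t ≤ h}, (A + 1) * h ^ θ < dist (W ω t₀) (W ω t)} +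
        s.card * ENNReal.ofReal (C * (2 * ((A + 1) * h ^ θ)) ^ d) :=
        measure_exists_mem_le_add hFs fun x _ ↦ hball t₀ ht₀ x _ (by positivity)
    _ ≤ ENNReal.ofReal (K * h ^ (θ * (d - g))) +
        ENNReal.ofReal (((A + 1) * h ^ θ) ^ (-g) * (C * (2 * ((A + 1) * h ^ θ)) ^ d)) := by
        refine add_le_add ((measure_mono ?_).trans (hmod h hh)) ?_
        · rintro ω ⟨t, ⟨ht, hdist⟩, hlt⟩
          exact ⟨t₀, ht₀, t, ht, hdist, lt_of_le_of_lt (by gcongr; linarith) hlt⟩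
        · rw [← ofReal_natCast, ← ofReal_mul (Nat.cast_nonneg _)]
          exact ofReal_le_ofReal (by gcongr)
    _ = ENNReal.ofReal ((K + C * 2 ^ d * (A + 1) ^ (d - g)) * h ^ (θ * (d - g))) := by
        have hη : ((A + 1) * h ^ θ) ^ (-g) * ((A + 1) * h ^ θ) ^ d =
            (A + 1) ^ (d - g) * h ^ (θ * (d - g)) := by
          rw [← Real.rpow_add (by positivity), Real.mul_rpow (by positivity) (by positivity),
            ← Real.rpow_mul hh0.le, neg_add_eq_sub]
        rw [← ofReal_add (by positivity) (by positivity),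
          Real.mul_rpow two_pos.le (by positivity)]
        congr 1
        linear_combination C * 2 ^ d * hη

lemma measure_exists_mem_le_mul_hMeasure [PseudoMetricSpace T] (hC : 0 < C) (hδ : 0 < δ)
    (hlocal : ∀ h, 0 < h → h ≤ δ → ∀ t₀ ∈ E,
      P {ω | ∃ t ∈ {t ∈ E | dist t₀ t ≤ h}, W ω t ∈ F} ≤ ENNReal.ofReal (C * h ^ β)) :
    P {ω | ∃ t ∈ E, W ω t ∈ F} ≤
      ENNReal.ofReal C * hMeasure (fun s t : T => dist s t) β E := by
  have hcell (c : T) {r : ℝ} (hr0 : 0 < r) (hr : r ≤ δ / 2) :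
      P {ω | ∃ t ∈ E, dist t c < r ∧ W ω t ∈ F} ≤
        ENNReal.ofReal C * ENNReal.ofReal ((2 * r) ^ β) := by
    by_cases hex : ∃ t₀ ∈ E, dist t₀ c < r
    · obtain ⟨t₀, ht₀, hc₀⟩ := hex
      rw [← ofReal_mul hC.le]
      refine (measure_mono ?_).trans (hlocal (2 * r) (by positivity) (by linarith) t₀ ht₀)
      rintro ω ⟨t, ht, hc, htF⟩
      exact ⟨t, ⟨ht, by linarith [dist_triangle_right t₀ t c]⟩, htF⟩
    · refine (measure_mono (t := ∅) ?_).trans (by simp only [measure_empty, zero_le])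
      exact fun ω ⟨t, ht, hc, _⟩ ↦ hex ⟨t, ht, hc⟩
  have hcover : ∀ (c : ℕ → T) (r : ℕ → ℝ), (∀ n, 0 < r n ∧ r n ≤ δ / 2) →
      E ⊆ ⋃ n, {y | dist y (c n) < r n} →
      P {ω | ∃ t ∈ E, W ω t ∈ F} ≤ ENNReal.ofReal C * ∑' n, ENNReal.ofReal ((2 * r n) ^ β) := by
    intro c r hr hE
    rw [← ENNReal.tsum_mul_left]
    refine (measure_mono ?_).trans ((measure_iUnion_le _).trans
      (ENNReal.tsum_le_tsum fun n ↦ hcell (c n) (hr n).1 (hr n).2))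
    rintro ω ⟨t, ht, htF⟩
    obtain ⟨n, hn⟩ := mem_iUnion.1 (hE ht)
    exact mem_iUnion.2 ⟨n, t, ht, hn, htF⟩
  have hC' : ENNReal.ofReal C ≠ 0 := (ofReal_pos.2 hC).ne'
  rw [mul_comm, ← ENNReal.div_le_iff hC' ofReal_ne_top]
  refine le_trans ?_ (le_iSup₂ (δ / 2) (half_pos hδ))
  refine le_iInf₂ fun c r ↦ le_iInf₂ fun hr hE ↦ ?_
  rw [ENNReal.div_le_iff hC' ofReal_ne_top, mul_comm]
  exact hcover c r hr hE

end HittingUpperBound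

lemma HolderWithExp.exists_dist_le {V : Type*} [NormedAddCommGroup V] {f : ℝ → V} {H : ℝ}
    {S : Set ℝ} (hf : HolderWithExp f H S) :
    ∃ K, 0 ≤ K ∧ ∀ s ∈ S, ∀ t ∈ S, dist (f s) (f t) ≤ K * |s - t| ^ H := by
  obtain ⟨K, hK⟩ := hf
  refine ⟨|K|, abs_nonneg K, fun s hs t ht ↦ dist_eq_norm (f s) (f t) ▸ (hK s hs t ht).trans ?_⟩
  gcongr
  exact le_abs_self K

namespace IsFBM

variable {Ω : Type*} [MeasurableSpace Ω] {P : Measure Ω} {H : ℝ} {d : ℕ}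
  {B : Ω → ℝ → EuclideanSpace ℝ (Fin d)} {a b θ : ℝ} {f : ℝ → EuclideanSpace ℝ (Fin d)}
  {F : Set (EuclideanSpace ℝ (Fin d))}

lemma exists_measure_modulus_gt_le {q : ℝ} (hB : IsFBM P H d B) (hθ : 0 < θ) (hθH : θ < H)
    (hq : 0 < q) : ∃ A K : ℝ, 0 ≤ A ∧ 0 ≤ K ∧ ∀ h ∈ Ioc (0 : ℝ) 1,
      P {ω | ∃ s ∈ Icc (0 : ℝ) 1, ∃ t ∈ Icc (0 : ℝ) 1,
        |s - t| ≤ h ∧ A * h ^ θ < dist (B ω s) (B ω t)} ≤ ENNReal.ofReal (K * h ^ q) := by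
  have hHθ : 0 < H - θ := sub_pos.2 hθH
  obtain ⟨C, hC, htail⟩ := hB.exists_measure_tail_dist_le (hθ.trans hθH)
    (p := (q + 1) / (H - θ)) (by positivity)
  have hp : (H - θ) * ((q + 1) / (H - θ)) - 1 = q := by field_simp; ring
  simpa only [hp] using _root_.exists_measure_modulus_gt_le hB.cont hθ (by linarith) hC htail

lemma exists_measure_modulus_add_gt_le {q : ℝ} (hB : IsFBM P H d B) (hS : Icc a b ⊆ Icc 0 1)
    (hf : HolderWithExp f H (Icc a b)) (hθ : 0 < θ) (hθH : θ < H) (hq : 0 < q) :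
    ∃ A K : ℝ, 0 ≤ A ∧ 0 ≤ K ∧ ∀ h ∈ Ioc (0 : ℝ) 1,
      P {ω | ∃ s ∈ Icc a b, ∃ t ∈ Icc a b,
        dist s t ≤ h ∧ A * h ^ θ < dist (B ω s + f s) (B ω t + f t)} ≤
        ENNReal.ofReal (K * h ^ q) := by
  obtain ⟨A, K, hA, hK, hmod⟩ := hB.exists_measure_modulus_gt_le hθ hθH hq
  obtain ⟨L, hL, hf⟩ := hf.exists_dist_le
  refine ⟨A + L, K, by positivity, hK, fun h hh ↦ (measure_mono ?_).trans (hmod h hh)⟩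
  rintro ω ⟨s, hs, t, ht, hst, hlt⟩
  refine ⟨s, hS hs, t, hS ht, hst, lt_of_add_lt_add_right (a := L * h ^ θ) ?_⟩
  have hfst : dist (f s) (f t) ≤ L * h ^ θ := by
    refine (hf s hs t ht).trans (mul_le_mul_of_nonneg_left ?_ hL)
    exact (Real.rpow_le_rpow (abs_nonneg _) hst (hθ.trans hθH).le).trans
      (Real.rpow_le_rpow_of_exponent_ge hh.1 hh.2 hθH.le)
  linarith [dist_add_add_le (B ω s) (f s) (B ω t) (f t)]

lemma measure_dist_add_le {η t : ℝ} (hB : IsFBM P H d B) (hH : 0 < H) (ha : 0 < a)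
    (ht : t ∈ Icc a 1) (x v : EuclideanSpace ℝ (Fin d)) (hη : 0 ≤ η) :
    P {ω | dist (B ω t + v) x ≤ η} ≤ ENNReal.ofReal ((a ^ H)⁻¹ ^ d * η ^ (d : ℝ)) := by
  rw [Real.rpow_natCast, ← mul_pow, inv_mul_eq_div]
  refine (measure_mono fun ω hω i ↦ ?_).trans
    (hB.measure_forall_abs_coord_sub_le hH ha ht (x - v) hη)
  rw [mem_ofPred_eq, dist_eq_norm, ← sub_sub_eq_add_sub] at hω
  exact (PiLp.norm_apply_le (B ω t - (x - v)) i).trans hω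

theorem exists_measure_hit_le_mul_hMeasure {γ : ℝ} (hB : IsFBM P H d B) (hH : 0 < H)
    (ha : 0 < a) (hb : b ≤ 1) (hf : HolderWithExp f H (Icc a b)) (hF : TotallyBounded F)
    (h0 : 0 < upMinkDim (fun x y : EuclideanSpace ℝ (Fin d) => dist x y) F)
    (hγ : upMinkDim (fun x y : EuclideanSpace ℝ (Fin d) => dist x y) F < γ) (hγd : γ < d) :
    ∃ c, 0 < c ∧ ∀ E ⊆ Icc a b, P {ω | ∃ t ∈ E, B ω t + f t ∈ F} ≤
      ENNReal.ofReal c * hMeasure (fun s t : ℝ => dist s t) (H * (d - γ)) E := by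
  obtain ⟨g, hg, hgγ⟩ := exists_between hγ
  have hdg : 0 < d - g := by linarith
  -- `θ` is chosen so that covers of `F` at scale `h ^ θ` still gain the exponent `H * (d - γ)`.
  set θ := H * (d - γ) / (d - g) with hθ_def
  have hθ : 0 < θ := div_pos (mul_pos hH (sub_pos.2 hγd)) hdg
  have hθH : θ < H := by
    rw [hθ_def, div_lt_iff₀ hdg]
    gcongr
  have hβ : θ * (d - g) = H * (d - γ) := div_mul_cancel₀ _ hdg.ne'
  obtain ⟨A, K, hA, hK, hmod⟩ := hB.exists_measure_modulus_add_gt_le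
    (Icc_subset_Icc ha.le hb) hf hθ hθH (q := θ * (d - g)) (by positivity)
  obtain ⟨C, hC, hnear⟩ := exists_measure_exists_mem_near_le (W := fun ω t ↦ B ω t + f t)
    hA hK (by positivity) hθ (eventually_exists_cover_card_le_rpow_neg hF h0 hg)
    (fun t ht x η hη ↦ hB.measure_dist_add_le hH ha (Icc_subset_Icc_right hb ht) x (f t) hη) hmod
  obtain ⟨δ, hδ, hnear⟩ := mem_nhdsGT_iff_exists_Ioc_subset.1 hnear
  refine ⟨C + 1, by positivity, fun E hE ↦ measure_exists_mem_le_mul_hMeasure (by positivity) hδ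
    fun h hh0 hhδ t₀ ht₀ ↦ ?_⟩
  refine (measure_mono ?_).trans ((hnear ⟨hh0, hhδ⟩ t₀ (hE ht₀)).trans (ofReal_le_ofReal ?_))
  · exact fun ω ⟨t, ⟨ht, hdist⟩, htF⟩ ↦ ⟨t, ⟨hE ht, hdist⟩, htF⟩
  · rw [hβ]
    gcongr
    linarith

end IsFBM

section SecondMoment

variable {Ω : Type*} [MeasurableSpace Ω] {P : Measure Ω}

lemma sq_lintegral_le_measure_ne_zero_mul {Z : Ω → ℝ≥0∞} (hZ : Measurable Z) :
    (∫⁻ ω, Z ω ∂P) ^ 2 ≤ P {ω | Z ω ≠ 0} * ∫⁻ ω, Z ω ^ 2 ∂P := by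
  have hS : MeasurableSet {ω | Z ω ≠ 0} := hZ (measurableSet_singleton 0).compl
  have hind : {ω | Z ω ≠ 0}.indicator 1 * Z = Z := by
    ext ω
    by_cases h : Z ω = 0 <;> simp [h]
  have hCS := ENNReal.lintegral_mul_le_Lp_mul_Lq P Real.HolderConjugate.two_two
    (measurable_one.indicator hS).aemeasurable hZ.aemeasurable
  have hone : ∫⁻ ω, {ω | Z ω ≠ 0}.indicator (1 : Ω → ℝ≥0∞) ω ^ 2 ∂P = P {ω | Z ω ≠ 0} := by
    rw [← lintegral_indicator_one hS]
    congr 1 with ω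
    by_cases h : Z ω = 0 <;> simp [h]
  simp only [hind, rpow_two, hone, ← mul_rpow_of_nonneg _ _ one_half_pos.le] at hCS
  calc (∫⁻ ω, Z ω ∂P) ^ 2 ≤ ((P {ω | Z ω ≠ 0} * ∫⁻ ω, Z ω ^ 2 ∂P) ^ (1 / 2 : ℝ)) ^ 2 := by gcongr
    _ = P {ω | Z ω ≠ 0} * ∫⁻ ω, Z ω ^ 2 ∂P := by
      rw [← rpow_two, ← rpow_mul]
      norm_num

variable {X : Type*} [MeasurableSpace X] {m : Measure X} {A : Set (Ω × X)}

lemma lintegral_measure_section [SFinite P] [SFinite m] (hA : MeasurableSet A) :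
    ∫⁻ x, P {ω | (ω, x) ∈ A} ∂m = ∫⁻ ω, m {x | (ω, x) ∈ A} ∂P :=
  (Measure.prod_apply_symm hA).symm.trans (Measure.prod_apply hA)

lemma sq_lintegral_measure_section_le [SFinite P] [SFinite m] (hA : MeasurableSet A) :
    (∫⁻ x, P {ω | (ω, x) ∈ A} ∂m) ^ 2 ≤ P {ω | m {x | (ω, x) ∈ A} ≠ 0} *
      ∫⁻ x, ∫⁻ y, P {ω | (ω, x) ∈ A ∧ (ω, y) ∈ A} ∂m ∂m := by
  have hA2 : MeasurableSet {z : Ω × X × X | (z.1, z.2.1) ∈ A ∧ (z.1, z.2.2) ∈ A} := by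
    refine .inter (?_ : MeasurableSet ((fun z : Ω × X × X ↦ (z.1, z.2.1)) ⁻¹' A))
      (?_ : MeasurableSet ((fun z : Ω × X × X ↦ (z.1, z.2.2)) ⁻¹' A)) <;>
    exact measurableSet_preimage (by fun_prop) hA
  have hpair : ∫⁻ x, ∫⁻ y, P {ω | (ω, x) ∈ A ∧ (ω, y) ∈ A} ∂m ∂m
      = ∫⁻ ω, m {x | (ω, x) ∈ A} ^ 2 ∂P := by
    calc ∫⁻ x, ∫⁻ y, P {ω | (ω, x) ∈ A ∧ (ω, y) ∈ A} ∂m ∂m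
        = ∫⁻ z, P {ω | (ω, z.1) ∈ A ∧ (ω, z.2) ∈ A} ∂m.prod m :=
          (lintegral_prod _ (measurable_measure_prodMk_right hA2).aemeasurable).symm
      _ = ∫⁻ ω, (m.prod m) ({x | (ω, x) ∈ A} ×ˢ {x | (ω, x) ∈ A}) ∂P :=
          lintegral_measure_section hA2
      _ = ∫⁻ ω, m {x | (ω, x) ∈ A} ^ 2 ∂P := by simp only [Measure.prod_prod, sq]
  rw [hpair, lintegral_measure_section hA]
  exact sq_lintegral_le_measure_ne_zero_mul (measurable_measure_prodMk_left hA)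

lemma inv_le_measure_section_ne_zero [SFinite P] [IsProbabilityMeasure m]
    (hA : MeasurableSet A) {q J : ℝ≥0∞} (hq0 : q ≠ 0) (hq : q ≠ ∞)
    (hfirst : ∀ᵐ x ∂m, q ≤ P {ω | (ω, x) ∈ A})
    (hsecond : ∫⁻ x, ∫⁻ y, P {ω | (ω, x) ∈ A ∧ (ω, y) ∈ A} ∂m ∂m ≤ q ^ 2 * J) :
    J⁻¹ ≤ P {ω | m {x | (ω, x) ∈ A} ≠ 0} := by
  have hmean : q ≤ ∫⁻ x, P {ω | (ω, x) ∈ A} ∂m := by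
    simpa only [lintegral_const, measure_univ, mul_one] using lintegral_mono_ae hfirst
  have hcancel : q ^ 2 * 1 ≤ q ^ 2 * (P {ω | m {x | (ω, x) ∈ A} ≠ 0} * J) := by
    calc q ^ 2 * 1 ≤ (∫⁻ x, P {ω | (ω, x) ∈ A} ∂m) ^ 2 := by rw [mul_one]; gcongr
      _ ≤ _ := sq_lintegral_measure_section_le hA
      _ ≤ P {ω | m {x | (ω, x) ∈ A} ≠ 0} * (q ^ 2 * J) := by gcongr
      _ = q ^ 2 * (P {ω | m {x | (ω, x) ∈ A} ≠ 0} * J) := by ring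
  rw [← one_div]
  exact div_le_of_le_mul
    ((ENNReal.mul_le_mul_iff_right (pow_ne_zero 2 hq0) (pow_ne_top hq)).1 hcancel)

end SecondMoment

section HittingLowerBound

lemma exists_mem_of_forall_exists_dist_le {T Y : Type*} [TopologicalSpace T]
    [PseudoMetricSpace Y] {E : Set T} {F : Set Y} {g : T → Y} (hE : IsCompact E)
    (hF : IsClosed F) (hg : ContinuousOn g E)
    (h : ∀ ε : ℝ, 0 < ε → ∃ t ∈ E, ∃ x ∈ F, dist (g t) x ≤ ε) : ∃ t ∈ E, g t ∈ F := by
  by_contra! hdisj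
  obtain ⟨δ, hδ, hthick⟩ := (disjoint_left.2 (forall_mem_image.2 hdisj)).exists_thickenings
    (hE.image_of_continuousOn hg) hF
  obtain ⟨t, ht, x, hx, hdist⟩ := h (δ / 2) (half_pos hδ)
  have hmem : g t ∈ Metric.thickening δ F :=
    Metric.mem_thickening_iff.2 ⟨x, hx, hdist.trans_lt (half_lt_self hδ)⟩
  exact disjoint_left.1 hthick
    (Metric.self_subset_thickening hδ _ (mem_image_of_mem g ht)) hmem

variable {Ω T Y : Type*} [MeasurableSpace Ω] [MeasurableSpace T] [MeasurableSpace Y]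
  {P : Measure Ω} {μ : Measure T} {ν : Measure Y} {E : Set T} {F : Set Y} {W : Ω → T → Y}

lemma lintegral_lintegral_prod_le [IsProbabilityMeasure ν] [SFinite μ]
    (hμ : μ Eᶜ = 0) (hν : ν Fᶜ = 0) {φ : T × Y → T × Y → ℝ≥0∞} {κ : T → T → ℝ≥0∞} {q : ℝ≥0∞}
    (hq : q ≠ ∞)
    (hφ : ∀ s ∈ E, ∀ t ∈ E, ∀ x ∈ F, ∫⁻ y, φ (s, x) (t, y) ∂ν ≤ q * κ s t) :
    ∫⁻ p, ∫⁻ p', φ p p' ∂μ.prod ν ∂μ.prod ν ≤ q * ∫⁻ s, ∫⁻ t, κ s t ∂μ ∂μ := by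
  have hE : ∀ᵐ t ∂μ, t ∈ E := mem_ae_iff.2 hμ
  have hF : ∀ᵐ x ∂ν, x ∈ F := mem_ae_iff.2 hν
  have hinner : ∀ᵐ s ∂μ, ∀ᵐ x ∂ν,
      ∫⁻ p', φ (s, x) p' ∂μ.prod ν ≤ q * ∫⁻ t, κ s t ∂μ := by
    filter_upwards [hE] with s hs
    filter_upwards [hF] with x hx
    calc ∫⁻ p', φ (s, x) p' ∂μ.prod ν ≤ ∫⁻ t, ∫⁻ y, φ (s, x) (t, y) ∂ν ∂μ := lintegral_prod_le _
      _ ≤ ∫⁻ t, q * κ s t ∂μ := lintegral_mono_ae (hE.mono fun t ht ↦ hφ s hs t ht x hx)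
      _ = q * ∫⁻ t, κ s t ∂μ := lintegral_const_mul' _ _ hq
  calc ∫⁻ p, ∫⁻ p', φ p p' ∂μ.prod ν ∂μ.prod ν
      ≤ ∫⁻ s, ∫⁻ x, ∫⁻ p', φ (s, x) p' ∂μ.prod ν ∂ν ∂μ := lintegral_prod_le _
    _ ≤ ∫⁻ s, ∫⁻ _, q * ∫⁻ t, κ s t ∂μ ∂ν ∂μ :=
      lintegral_mono_ae (hinner.mono fun s hs ↦ lintegral_mono_ae hs)
    _ = q * ∫⁻ s, ∫⁻ t, κ s t ∂μ ∂μ := by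
      simp only [lintegral_const, measure_univ, mul_one]
      exact lintegral_const_mul' _ _ hq

lemma ae_prod_mem_prod [SFinite μ] [SFinite ν] (hμ : μ Eᶜ = 0) (hν : ν Fᶜ = 0) :
    ∀ᵐ p ∂μ.prod ν, p ∈ E ×ˢ F :=
  mem_ae_iff.2 (Measure.measure_prod_compl_eq_zero hμ hν)

variable [PseudoMetricSpace Y] [OpensMeasurableSpace Y] [SecondCountableTopology Y]

lemma measurableSet_dist_le (hW : Measurable fun z : Ω × T ↦ W z.1 z.2) (ε : ℝ) :
    MeasurableSet {z : Ω × T × Y | dist (W z.1 z.2.1) z.2.2 ≤ ε} :=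
  have hWfst : Measurable fun z : Ω × T × Y ↦ W z.1 z.2.1 :=
    hW.comp (by fun_prop : Measurable fun z : Ω × T × Y ↦ (z.1, z.2.1))
  measurableSet_le (hWfst.dist (by fun_prop)) measurable_const

variable [IsProbabilityMeasure P] [IsProbabilityMeasure μ] [IsProbabilityMeasure ν]

theorem inv_lintegral_le_measure_hit [TopologicalSpace T] (hE : IsCompact E) (hF : IsClosed F)
    (hμ : μ Eᶜ = 0) (hν : ν Fᶜ = 0) (hW : Measurable fun z : Ω × T ↦ W z.1 z.2)
    (hWE : ∀ ω, ContinuousOn (W ω) E) {κ : T → T → ℝ≥0∞} {q : ℝ → ℝ≥0∞}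
    (hq : ∀ ε ∈ Ioc (0 : ℝ) 1, q ε ≠ 0 ∧ q ε ≠ ∞)
    (hfirst : ∀ ε ∈ Ioc (0 : ℝ) 1, ∀ t ∈ E, ∀ x ∈ F, q ε ≤ P {ω | dist (W ω t) x ≤ ε})
    (hsecond : ∀ ε ∈ Ioc (0 : ℝ) 1, ∀ s ∈ E, ∀ t ∈ E, ∀ x ∈ F,
      ∫⁻ y, P {ω | dist (W ω s) x ≤ ε ∧ dist (W ω t) y ≤ ε} ∂ν ≤ q ε ^ 2 * κ s t) :
    (∫⁻ s, ∫⁻ t, κ s t ∂μ ∂μ)⁻¹ ≤ P {ω | ∃ t ∈ E, W ω t ∈ F} := by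
  set G : ℝ → Set Ω := fun ε ↦ {ω | μ.prod ν {p | dist (W ω p.1) p.2 ≤ ε} ≠ 0}
  have hlim : Filter.Tendsto (P ∘ G) (nhdsWithin 0 (Ioi 0)) (nhds (P (⋂ ε > 0, G ε))) := by
    refine tendsto_measure_biInter_gt (fun ε _ ↦ (measurable_measure_prodMk_left
      (measurableSet_dist_le hW ε) (measurableSet_singleton 0).compl).nullMeasurableSet)
      (fun ε η _ hεη ω hω ↦ ?_) ⟨1, one_pos, measure_ne_top _ _⟩
    exact ((pos_iff_ne_zero.2 hω).trans_le (measure_mono fun p hp ↦ hp.trans hεη)).ne'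
  have hhit : ⋂ ε > 0, G ε ⊆ {ω | ∃ t ∈ E, W ω t ∈ F} := fun ω hω ↦ by
    refine exists_mem_of_forall_exists_dist_le hE hF (hWE ω) fun ε hε ↦ ?_
    obtain ⟨p, hp, hpE, hpF⟩ := ((frequently_ae_mem_iff.2 (mem_iInter₂.1 hω ε hε)).and_eventually
      (ae_prod_mem_prod hμ hν)).exists
    exact ⟨p.1, hpE, p.2, hpF, hp⟩
  refine (ge_of_tendsto hlim ?_).trans (measure_mono hhit)
  filter_upwards [Ioc_mem_nhdsGT one_pos] with ε hε
  exact inv_le_measure_section_ne_zero (measurableSet_dist_le hW ε) (hq ε hε).1 (hq ε hε).2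
    ((ae_prod_mem_prod hμ hν).mono fun p hp ↦ hfirst ε hε p.1 hp.1 p.2 hp.2)
    (lintegral_lintegral_prod_le hμ hν (pow_ne_top (hq ε hε).2) (hsecond ε hε))

theorem inv_lintegral_le_measure_hit_of_subset_Icc [BorelSpace Y] {a b : ℝ} (hab : a ≤ b)
    {μ : Measure ℝ} [IsProbabilityMeasure μ] {E : Set ℝ} (hE : IsCompact E) (hEI : E ⊆ Icc a b)
    (hF : IsClosed F) (hμ : μ Eᶜ = 0) (hν : ν Fᶜ = 0) {W : Ω → ℝ → Y}
    (hW : ∀ t ∈ Icc a b, Measurable fun ω ↦ W ω t) (hWc : ∀ ω, ContinuousOn (W ω) (Icc a b))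
    {κ : ℝ → ℝ → ℝ≥0∞} {q : ℝ → ℝ≥0∞} (hq : ∀ ε ∈ Ioc (0 : ℝ) 1, q ε ≠ 0 ∧ q ε ≠ ∞)
    (hfirst : ∀ ε ∈ Ioc (0 : ℝ) 1, ∀ t ∈ E, ∀ x ∈ F, q ε ≤ P {ω | dist (W ω t) x ≤ ε})
    (hsecond : ∀ ε ∈ Ioc (0 : ℝ) 1, ∀ s ∈ E, ∀ t ∈ E, ∀ x ∈ F,
      ∫⁻ y, P {ω | dist (W ω s) x ≤ ε ∧ dist (W ω t) y ≤ ε} ∂ν ≤ q ε ^ 2 * κ s t) :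
    (∫⁻ s, ∫⁻ t, κ s t ∂μ ∂μ)⁻¹ ≤ P {ω | ∃ t ∈ E, W ω t ∈ F} := by
  set W' : Ω → ℝ → Y := fun ω ↦ IccExtend hab ((Icc a b).domRestrict (W ω))
  have hWW' : ∀ ω, EqOn (W' ω) (W ω) (Icc a b) := fun ω t ht ↦ IccExtend_of_mem hab _ ht
  have hmeas : Measurable fun z : Ω × ℝ ↦ W' z.1 z.2 :=
    (measurable_uncurry_of_continuous_of_measurable (u := fun t ω ↦ W' ω t)
      (fun ω ↦ (hWc ω).domRestrict.Icc_extend') fun t ↦ hW _ (projIcc a b hab t).2).comp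
      measurable_swap
  have hhit := inv_lintegral_le_measure_hit hE hF hμ hν hmeas
    (fun ω ↦ ((hWc ω).congr (hWW' ω)).mono hEI) hq
    (fun ε hε t ht x hx ↦ by simpa only [hWW' _ (hEI ht)] using hfirst ε hε t ht x hx)
    (fun ε hε s hs t ht x hx ↦ by
      simpa only [hWW' _ (hEI hs), hWW' _ (hEI ht)] using hsecond ε hε s hs t ht x hx)
  refine hhit.trans (measure_mono fun ω ⟨t, ht, htF⟩ ↦ ⟨t, ht, ?_⟩)
  rwa [hWW' ω (hEI ht)] at htF

end HittingLowerBound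

lemma max_dist_le_one_add_mul_max_dist_sub {V : Type*} [SeminormedAddCommGroup V] {u v x y : V}
    {K ρ : ℝ} (hK : 0 ≤ K) (hρ : 0 ≤ ρ) (huv : dist u v ≤ K * ρ) :
    max ρ (dist x y) ≤ (1 + K) * max ρ (dist (x - u) (y - v)) := by
  have hdist : dist x y ≤ dist (x - u) (y - v) + dist u v := by
    simpa only [sub_add_cancel] using dist_add_add_le (x - u) u (y - v) v
  have hKmax : K * ρ ≤ K * max ρ (dist (x - u) (y - v)) := by gcongr; exact le_max_left _ _
  have hle := le_max_left ρ (dist (x - u) (y - v))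
  have hle' := le_max_right ρ (dist (x - u) (y - v))
  refine max_le ?_ ?_ <;> nlinarith

lemma radialKernel_of_pos {α r : ℝ} (hα : 0 < α) : radialKernel α r = ENNReal.ofReal r ^ (-α) :=
  if_pos hα

lemma inv_mul_capacity_le {X : Type*} [MeasurableSpace X] {ρ : X → X → ℝ} {α : ℝ} {G : Set X}
    {k p : ℝ≥0∞} (hk0 : k ≠ 0) (hk : k ≠ ∞)
    (h : ∀ μ : Measure X, IsProbabilityMeasure μ → μ Gᶜ = 0 → (k * energy ρ α μ)⁻¹ ≤ p) :
    k⁻¹ * capacity ρ α G ≤ p := by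
  simp only [capacity, ENNReal.inv_iInf, ENNReal.mul_iSup, iSup_le_iff]
  intro μ hμ hG
  rw [← ENNReal.mul_inv (.inl hk0) (.inl hk)]
  exact h μ hμ hG

lemma HolderWithExp.continuousOn {V : Type*} [NormedAddCommGroup V] {f : ℝ → V} {H : ℝ}
    {S : Set ℝ} (hf : HolderWithExp f H S) (hH : 0 < H) : ContinuousOn f S := by
  obtain ⟨K, hK, hKf⟩ := hf.exists_dist_le
  have hHolder : HolderOnWith K.toNNReal H.toNNReal f S := fun s hs t ht ↦ by
    rw [edist_dist, edist_dist, Real.coe_toNNReal _ hH.le, ENNReal.ofReal_rpow_of_nonneg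
      dist_nonneg hH.le, ← ENNReal.ofReal, ← ENNReal.ofReal_mul hK]
    exact ofReal_le_ofReal (hKf s hs t ht)
  exact hHolder.continuousOn (Real.toNNReal_pos.2 hH)

lemma lt_finrank_of_ofReal_lt_dimH {V : Type*} [NormedAddCommGroup V] [NormedSpace ℝ V]
    [FiniteDimensional ℝ V] {F : Set V} {γ : ℝ} (h : ENNReal.ofReal γ < dimH F) :
    γ < Module.finrank ℝ V := by
  have hdim : dimH F ≤ Module.finrank ℝ V :=
    (dimH_mono (subset_univ F)).trans_eq (Real.dimH_univ_eq_finrank V)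
  exact lt_of_not_ge fun hle ↦ (h.trans_le hdim).not_ge (by simpa using ofReal_le_ofReal hle)

namespace IsFBM

variable {Ω : Type*} [MeasurableSpace Ω] {P : Measure Ω} {H : ℝ} {d : ℕ}
  {B : Ω → ℝ → EuclideanSpace ℝ (Fin d)} {f : ℝ → EuclideanSpace ℝ (Fin d)} {a b : ℝ}

lemma exists_le_measure_dist_le (hB : IsFBM P H d B) (hH : 0 < H) (hd : 0 < d) (ha : 0 < a)
    (M : ℝ) : ∃ c, 0 < c ∧ ∀ t ∈ Icc a 1, ∀ y {ε : ℝ}, ‖y‖ ≤ M → 0 ≤ ε → ε ≤ 1 →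
      ENNReal.ofReal ((c * ε) ^ d) ≤ P {ω | dist (B ω t) y ≤ ε} := by
  obtain ⟨c, hc, hle⟩ := hB.exists_le_measure_forall_abs_coord_sub_le hH ha M
  have hd1 : 1 ≤ √d := Real.one_le_sqrt.2 (mod_cast hd)
  have : Nonempty (Fin d) := Fin.pos_iff_nonempty.1 hd
  refine ⟨c / √d, by positivity, fun t ht y ε hy hε0 hε1 ↦ ?_⟩
  have hη1 : ε / √d ≤ 1 := div_le_one_of_le₀ (hε1.trans hd1) (by positivity)
  rw [show c / √d * ε = c * (ε / √d) by ring]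
  refine (hle t ht y (fun i ↦ (PiLp.norm_apply_le y i).trans hy) (by positivity) hη1).trans
    (measure_mono fun ω hω ↦ ?_)
  obtain ⟨i, hi⟩ := exists_dist_le_sqrt_card_mul (B ω t) y
  calc dist (B ω t) y ≤ √d * |B ω t i - y i| := by simpa only [Fintype.card_fin] using hi
    _ ≤ √d * (ε / √d) := by gcongr; exact hω i
    _ = ε := mul_div_cancel₀ _ (by positivity)

lemma exists_le_measure_dist_add_le (hB : IsFBM P H d B) (hH : 0 < H) (hd : 0 < d) (ha : 0 < a)
    (hb : b ≤ 1) (hf : ContinuousOn f (Icc a b)) {F : Set (EuclideanSpace ℝ (Fin d))}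
    (hF : Bornology.IsBounded F) :
    ∃ c, 0 < c ∧ ∀ t ∈ Icc a b, ∀ x ∈ F, ∀ {ε : ℝ}, 0 ≤ ε → ε ≤ 1 →
      ENNReal.ofReal ((c * ε) ^ d) ≤ P {ω | dist (B ω t + f t) x ≤ ε} := by
  obtain ⟨M, hM⟩ := isCompact_Icc.exists_bound_of_continuousOn hf
  obtain ⟨N, hN⟩ := hF.exists_norm_le
  obtain ⟨c, hc, hle⟩ := hB.exists_le_measure_dist_le hH hd ha (N + M)
  refine ⟨c, hc, fun t ht x hx ε hε0 hε1 ↦ ?_⟩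
  have hdist : ∀ ω, dist (B ω t + f t) x = dist (B ω t) (x - f t) := fun ω ↦ by
    rw [dist_eq_norm, dist_eq_norm, sub_sub_eq_add_sub]
  simpa only [hdist] using hle t (Icc_subset_Icc_right hb ht) (x - f t)
    ((norm_sub_le _ _).trans (add_le_add (hN x hx) (hM t ht))) hε0 hε1

lemma exists_measure_dist_pair_le [IsProbabilityMeasure P] (hB : IsFBM P H d B)
    (hH : H ∈ Ioo 0 1) (ha : 0 < a) (hb : b ≤ 1) (hf : HolderWithExp f H (Icc a b)) :
    ∃ C, 0 ≤ C ∧ ∀ s ∈ Icc a b, ∀ t ∈ Icc a b, s ≠ t → ∀ x y {ε : ℝ}, 0 ≤ ε →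
      P {ω | dist (B ω s + f s) x ≤ ε ∧ dist (B ω t + f t) y ≤ ε} ≤
        ENNReal.ofReal (C * (ε ^ d) ^ 2) *
          ENNReal.ofReal (max (|t - s| ^ H) (dist x y) ^ (-d : ℝ)) := by
  obtain ⟨C, hC, hpair⟩ := hB.exists_measure_pair_le hH ha
  obtain ⟨K, hK, hKf⟩ := hf.exists_dist_le
  refine ⟨C * (1 + K) ^ d, by positivity, fun s hs t ht hst x y ε hε ↦ ?_⟩
  have hcoord : ∀ (u v w : EuclideanSpace ℝ (Fin d)) (i : Fin d),
      dist (u + v) w ≤ ε → |u i - (w - v) i| ≤ ε := fun u v w i h ↦ by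
    refine (PiLp.norm_apply_le (u - (w - v)) i).trans ?_
    rwa [← sub_add, sub_add_eq_add_sub, ← dist_eq_norm]
  have hρ : 0 < |t - s| ^ H := Real.rpow_pos_of_pos (abs_pos.2 (sub_ne_zero.2 hst.symm)) H
  have hmax := max_dist_le_one_add_mul_max_dist_sub (x := x) (y := y) hK hρ.le
    (abs_sub_comm s t ▸ hKf s hs t ht)
  set R := max (|t - s| ^ H) (dist x y)
  set R' := max (|t - s| ^ H) (dist (x - f s) (y - f t))
  have hR : 0 < R := hρ.trans_le (le_max_left _ _)
  have hR' : 0 < R' := hρ.trans_le (le_max_left _ _)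
  have hdiv : ε ^ 2 / R' ≤ (1 + K) * ε ^ 2 / R := by
    rw [div_le_div_iff₀ hR' hR]
    nlinarith [sq_nonneg ε]
  rw [← ENNReal.ofReal_mul (by positivity), Real.rpow_neg hR.le, Real.rpow_natCast]
  calc P {ω | dist (B ω s + f s) x ≤ ε ∧ dist (B ω t + f t) y ≤ ε}
      ≤ P {ω | ∀ i, |B ω s i - (x - f s) i| ≤ ε ∧ |B ω t i - (y - f t) i| ≤ ε} :=
        measure_mono fun ω hω i ↦ ⟨hcoord _ _ _ i hω.1, hcoord _ _ _ i hω.2⟩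
    _ ≤ ENNReal.ofReal (C * (ε ^ 2 / R') ^ d) :=
        hpair s ⟨hs.1, hs.2.trans hb⟩ t ⟨ht.1, ht.2.trans hb⟩ hst _ _ hε
    _ ≤ ENNReal.ofReal (C * ((1 + K) * ε ^ 2 / R) ^ d) := by gcongr
    _ = ENNReal.ofReal (C * (1 + K) ^ d * (ε ^ d) ^ 2 * (R ^ d)⁻¹) := by
        rw [div_pow, mul_pow, ← pow_mul, ← pow_mul, mul_comm d 2]
        ring_nf

lemma exists_lintegral_measure_dist_pair_le [IsProbabilityMeasure P] (hB : IsFBM P H d B)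
    (hH : H ∈ Ioo 0 1) (ha : 0 < a) (hb : b ≤ 1) (hf : HolderWithExp f H (Icc a b))
    {ν : Measure (EuclideanSpace ℝ (Fin d))} {C₀ γ : ℝ} (hC₀ : 0 ≤ C₀) (hγ : γ < d)
    (hν : ∀ x r, 0 < r → ν (Metric.ball x r) ≤ ENNReal.ofReal (C₀ * r ^ γ)) :
    ∃ C, 0 < C ∧ ∀ s ∈ Icc a b, ∀ t ∈ Icc a b, ∀ x {ε : ℝ}, 0 < ε →
      ∫⁻ y, P {ω | dist (B ω s + f s) x ≤ ε ∧ dist (B ω t + f t) y ≤ ε} ∂ν ≤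
        ENNReal.ofReal (C * (ε ^ d) ^ 2) * radialKernel (H * (d - γ)) (dist s t) := by
  obtain ⟨C₁, hC₁, hpair⟩ := hB.exists_measure_dist_pair_le hH ha hb hf
  obtain ⟨C₂, hC₂, hpot⟩ := exists_lintegral_max_rpow_neg_le hC₀ d.cast_nonneg hγ hν
  have hα : 0 < H * (d - γ) := mul_pos hH.1 (sub_pos.2 hγ)
  refine ⟨C₁ * C₂ + 1, by positivity, fun s hs t ht x ε hε ↦ ?_⟩
  rw [radialKernel_of_pos hα]
  obtain rfl | hst := eq_or_ne s t
  · have hpos : ENNReal.ofReal ((C₁ * C₂ + 1) * (ε ^ d) ^ 2) ≠ 0 := by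
      rw [ne_eq, ENNReal.ofReal_eq_zero, not_le]; positivity
    rw [dist_self, ENNReal.ofReal_zero, zero_rpow_of_neg (neg_neg_of_pos hα), mul_top hpos]
    exact le_top
  have hρ : 0 < |t - s| := abs_pos.2 (sub_ne_zero.2 hst.symm)
  calc ∫⁻ y, P {ω | dist (B ω s + f s) x ≤ ε ∧ dist (B ω t + f t) y ≤ ε} ∂ν
      ≤ ∫⁻ y, ENNReal.ofReal (C₁ * (ε ^ d) ^ 2) *
          ENNReal.ofReal (max (|t - s| ^ H) (dist x y) ^ (-d : ℝ)) ∂ν :=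
        lintegral_mono fun y ↦ hpair s hs t ht hst x y hε.le
    _ ≤ ENNReal.ofReal (C₁ * (ε ^ d) ^ 2) * ENNReal.ofReal (C₂ * (|t - s| ^ H) ^ (γ - d)) := by
        rw [lintegral_const_mul' _ _ ofReal_ne_top]
        gcongr
        exact hpot x _ (Real.rpow_pos_of_pos hρ H)
    _ = ENNReal.ofReal (C₁ * C₂ * (ε ^ d) ^ 2 * |t - s| ^ (-(H * (d - γ)))) := by
        rw [← ENNReal.ofReal_mul (by positivity), ← Real.rpow_mul hρ.le]
        congr 1
        ring_nf
    _ ≤ ENNReal.ofReal ((C₁ * C₂ + 1) * (ε ^ d) ^ 2 * |t - s| ^ (-(H * (d - γ)))) := by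
        gcongr
        linarith
    _ = _ := by
        rw [ENNReal.ofReal_mul (by positivity), ← ofReal_rpow_of_pos hρ, dist_comm, Real.dist_eq]

theorem exists_capacity_le_measure_hit [IsProbabilityMeasure P] {γ : ℝ} (hB : IsFBM P H d B)
    (hH : H ∈ Ioo 0 1) (ha : 0 < a) (hab : a ≤ b) (hb : b ≤ 1)
    (hf : HolderWithExp f H (Icc a b)) {F : Set (EuclideanSpace ℝ (Fin d))} (hF : IsCompact F)
    (hγ0 : 0 ≤ γ) (hγ : ENNReal.ofReal γ < dimH F) :
    ∃ c, 0 < c ∧ ∀ E ⊆ Icc a b, IsCompact E →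
      (ENNReal.ofReal c)⁻¹ * capacity (fun s t : ℝ => dist s t) (H * (d - γ)) E ≤
        P {ω | ∃ t ∈ E, B ω t + f t ∈ F} := by
  have hγd : γ < d := by
    simpa only [finrank_euclideanSpace_fin] using lt_finrank_of_ofReal_lt_dimH hγ
  have hfc := hf.continuousOn hH.1
  obtain ⟨c, hc, hfirst⟩ := hB.exists_le_measure_dist_add_le hH.1
    (Nat.cast_pos.1 (hγ0.trans_lt hγd)) ha hb hfc hF.isBounded
  obtain ⟨C₀, hC₀, ν, hνF, hν⟩ := exists_probabilityMeasure_ball_le hF hγ0 hγ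
  obtain ⟨C, hC, hsecond⟩ := hB.exists_lintegral_measure_dist_pair_le hH ha hb hf hC₀ hγd hν
  refine ⟨C / (c ^ d) ^ 2, by positivity, fun E hEI hE ↦ ?_⟩
  refine inv_mul_capacity_le (ofReal_pos.2 (by positivity)).ne' ofReal_ne_top fun μ _ hμ ↦ ?_
  simp only [energy, ← lintegral_const_mul' _ _ ofReal_ne_top]
  refine inv_lintegral_le_measure_hit_of_subset_Icc (q := fun ε ↦ ENNReal.ofReal ((c * ε) ^ d))
    hab hE hEI hF.isClosed hμ hνF (fun t _ ↦ (hB.meas t).add_const _)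
    (fun ω ↦ ((hB.cont ω).mono (Icc_subset_Icc ha.le hb)).add hfc)
    (fun ε hε ↦ ⟨(ofReal_pos.2 (pow_pos (mul_pos hc hε.1) d)).ne', ofReal_ne_top⟩)
    (fun ε hε t ht x hx ↦ hfirst t (hEI ht) x hx hε.1.le hε.2)
    (fun ε hε s hs t ht x _ ↦ (hsecond s (hEI hs) t (hEI ht) x hε.1).trans_eq ?_)
  rw [← mul_assoc, ← ofReal_pow (pow_nonneg (mul_nonneg hc.le hε.1.le) d),
    ← ENNReal.ofReal_mul (by positivity), mul_pow c]
  congr 2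
  field_simp

end IsFBM

theorem statement10_general {Ω : Type*} [MeasurableSpace Ω] {P : Measure Ω}
    [IsProbabilityMeasure P] {H : ℝ} (hH : H ∈ Ioo 0 1) {d : ℕ}
    {B : Ω → ℝ → EuclideanSpace ℝ (Fin d)} (hB : IsFBM P H d B) {a b : ℝ} (ha : 0 < a)
    (hab : a ≤ b) (hb : b ≤ 1) {f : ℝ → EuclideanSpace ℝ (Fin d)}
    (hf : HolderWithExp f H (Icc a b)) {F : Set (EuclideanSpace ℝ (Fin d))} (hF : IsCompact F)
    (h0 : 0 < upMinkDim (fun x y : EuclideanSpace ℝ (Fin d) => dist x y) F) {γ γ' : ℝ}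
    (hγ0 : 0 ≤ γ) (hγ : ENNReal.ofReal γ < dimH F)
    (hγ' : upMinkDim (fun x y : EuclideanSpace ℝ (Fin d) => dist x y) F < γ') (hγ'd : γ' < d) :
    ∃ c : ℝ, 1 ≤ c ∧ ∀ E ⊆ Icc a b,
      (IsCompact E →
        (ENNReal.ofReal c)⁻¹ * capacity (fun x y : ℝ => dist x y) (H * (d - γ)) E ≤
          P {ω | ∃ t ∈ E, B ω t + f t ∈ F}) ∧
      P {ω | ∃ t ∈ E, B ω t + f t ∈ F} ≤
        ENNReal.ofReal c * hMeasure (fun x y : ℝ => dist x y) (H * (d - γ')) E := by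
  obtain ⟨c₁, -, hlower⟩ := hB.exists_capacity_le_measure_hit hH ha hab hb hf hF hγ0 hγ
  obtain ⟨c₂, -, hupper⟩ :=
    hB.exists_measure_hit_le_mul_hMeasure hH.1 ha hb hf hF.totallyBounded h0 hγ' hγ'd
  refine ⟨max 1 (max c₁ c₂), le_max_left _ _, fun E hEI ↦ ⟨fun hE ↦ ?_, ?_⟩⟩
  · refine le_trans ?_ (hlower E hEI hE)
    gcongr
    exact (le_max_left c₁ c₂).trans (le_max_right _ _)
  · refine (hupper E hEI).trans ?_
    gcongr
    exact (le_max_right c₁ c₂).trans (le_max_right _ _)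

/-- Proposition 3.5: if `0 < dim F ≤ updim_M F < d`, then for all
`γ, γ'` with `0 < γ < dim F` and `updim_M F < γ' < d`,
`c⁻¹ C^{H(d-γ)}(E) ≤ ℙ((B^H+f)(E) ∩ F ≠ ∅) ≤ c ℋ^{H(d-γ')}(E)`. -/
theorem statement10 {Ω : Type*} [MeasurableSpace Ω] (ℙ : Measure Ω) [IsProbabilityMeasure ℙ]
    (H : ℝ) (hH : H ∈ Set.Ioo (0 : ℝ) 1) (d : ℕ) (hd : 0 < d)
    (B : Ω → ℝ → EuclideanSpace ℝ (Fin d)) (hB : IsFBM ℙ H d B)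
    (a b : ℝ) (ha : 0 < a) (hab : a < b) (hb : b ≤ 1)
    (f : ℝ → EuclideanSpace ℝ (Fin d)) (hf : HolderWithExp f H (Set.Icc a b))
    (E : Set ℝ) (hE : IsCompact E) (hEI : E ⊆ Set.Icc a b)
    (F : Set (EuclideanSpace ℝ (Fin d))) (hF : IsCompact F)
    (hdim0 : 0 < dimH F)
    (hdimM : dimH F ≤
      ENNReal.ofReal (upMinkDim (fun x y : EuclideanSpace ℝ (Fin d) => dist x y) F))
    (hMd : upMinkDim (fun x y : EuclideanSpace ℝ (Fin d) => dist x y) F < d) :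
    ∀ γ γ' : ℝ, 0 < γ → ENNReal.ofReal γ < dimH F →
      upMinkDim (fun x y : EuclideanSpace ℝ (Fin d) => dist x y) F < γ' → γ' < d →
      ∃ c : ℝ, 1 ≤ c ∧
        (ENNReal.ofReal c)⁻¹ * capacity (fun x y : ℝ => dist x y) (H * (d - γ)) E ≤
          ℙ {ω | ∃ t ∈ E, B ω t + f t ∈ F} ∧
        ℙ {ω | ∃ t ∈ E, B ω t + f t ∈ F} ≤
          ENNReal.ofReal c * hMeasure (fun x y : ℝ => dist x y) (H * (d - γ')) E := by
  intro γ γ' hγ0 hγ hγ' hγ'd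
  obtain ⟨c, hc, hbounds⟩ := statement10_general hH hB ha hab.le hb hf hF
    (ofReal_pos.1 (hdim0.trans_le hdimM)) hγ0.le hγ hγ' hγ'd
  exact ⟨c, hc, (hbounds E hEI).1 hE, (hbounds E hEI).2⟩
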